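/- Suppose Φ : 𝔻ⁿ → 𝔻ⁿ is holomorphic and C¹-smooth on the closed polydisc, and satisfies the rank condition (†): for every nonempty subset I ⊆ {1,…,n} of cardinality q and every ζ ∈ 𝕋ⁿ with Φ_I(ζ) ∈ 𝕋^q, the complex derivative d_ζΦ_I (the q×n Jacobian matrix of the components Φ_i, i ∈ I, at ζ) has rank q. Then for every β > -1 the composition operator C_Φ is bounded on the weighted Bergman space A²_β(𝔻ⁿ). -/

import Mathlib

open MeasureTheory Metric Set ENNReal

noncomputable section

/-- The open unit polydisc in `ℂⁿ`. -/
def polydisc (n : ℕ) : Set (Fin n → ℂ) := {z | ∀ j, ‖z j‖ < 1}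

/-- The closed unit polydisc in `ℂⁿ`. -/
def closedPolydisc (n : ℕ) : Set (Fin n → ℂ) := {z | ∀ j, ‖z j‖ ≤ 1}

/-- The distinguished boundary (torus) of the polydisc. -/
def torus (n : ℕ) : Set (Fin n → ℂ) := {z | ∀ j, ‖z j‖ = 1}

/-- The weighted Bergman measure `V_β` on the polydisc: the product of the measures
`dA_β(z) = (β+1)(1-|z|²)^β dA(z)`, where `dA` is normalized area measure on the unit disc. -/
def Vbeta (n : ℕ) (β : ℝ) : Measure (Fin n → ℂ) :=
  (volume.restrict (polydisc n)).withDensity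
    (fun z => ENNReal.ofReal (∏ j, ((β + 1) * (1 - ‖z j‖ ^ 2) ^ β / Real.pi)))

/-- The `(i,j)` entry `∂Φ_i/∂z_j(ζ)` of the complex Jacobian matrix of `Φ` at `ζ`
(computed via the derivative of the extension to the closed polydisc). -/
def jacEntry (n : ℕ) (Φ : (Fin n → ℂ) → (Fin n → ℂ)) (ζ : Fin n → ℂ) (i j : Fin n) : ℂ :=
  fderivWithin ℝ Φ (closedPolydisc n) ζ (Pi.single j 1) i

/-- The rank condition (†): for every nonempty `I ⊆ {1,…,n}` of cardinality `q` and
every `ζ ∈ 𝕋ⁿ` with `Φ_I(ζ) ∈ 𝕋^q`, the Jacobian `d_ζΦ_I` has rank `q`. -/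
def rankCond (n : ℕ) (Φ : (Fin n → ℂ) → (Fin n → ℂ)) : Prop :=
  ∀ I : Finset (Fin n), I.Nonempty → ∀ ζ ∈ torus n, (∀ i ∈ I, ‖Φ ζ i‖ = 1) →
    Matrix.rank (Matrix.of fun (i : I) (j : Fin n) => jacEntry n Φ ζ i j) = I.card

/-- The composition operator `C_Φ` is bounded on the weighted Bergman space `A²_β(𝔻ⁿ)`. -/
def bddBergman (n : ℕ) (β : ℝ) (Φ : (Fin n → ℂ) → (Fin n → ℂ)) : Prop :=
  ∃ C > (0:ℝ), ∀ f : (Fin n → ℂ) → ℂ, DifferentiableOn ℂ f (polydisc n) →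
    ∫⁻ z, ENNReal.ofReal (‖f (Φ z)‖ ^ 2) ∂(Vbeta n β) ≤
      ENNReal.ofReal C * ∫⁻ z, ENNReal.ofReal (‖f z‖ ^ 2) ∂(Vbeta n β)

section HelperLemmas
open scoped Topology ComplexConjugate
open Filter

theorem closedPolydisc_eq (n : ℕ) : closedPolydisc n = closedBall 0 1 := by
  ext z
  simp [closedPolydisc, pi_norm_le_iff_of_nonneg]

theorem polydisc_eq (n : ℕ) : polydisc n = ball 0 1 := by
  ext z
  simp [polydisc, pi_norm_lt_iff]

theorem polydisc_sub (n : ℕ) : polydisc n ⊆ closedPolydisc n := fun _ hz j => (hz j).le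

theorem isOpen_polydisc (n : ℕ) : IsOpen (polydisc n) := by
  rw [polydisc_eq]; exact isOpen_ball

theorem convex_cpd (n : ℕ) : Convex ℝ (closedPolydisc n) := by
  rw [closedPolydisc_eq]; exact convex_closedBall _ _

theorem compact_cpd (n : ℕ) : IsCompact (closedPolydisc n) := by
  rw [closedPolydisc_eq]; exact isCompact_closedBall _ _

theorem closure_polydisc (n : ℕ) : closure (polydisc n) = closedPolydisc n := by
  rw [closedPolydisc_eq, polydisc_eq]; exact closure_ball _ one_ne_zero

theorem uniqueDiff_cpd (n : ℕ) : UniqueDiffOn ℝ (closedPolydisc n) := by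
  apply uniqueDiffOn_convex (convex_cpd n)
  refine ⟨0, ?_⟩
  rw [mem_interior]
  exact ⟨_, polydisc_sub n, isOpen_polydisc n, fun j => by simp⟩

/-- The derivative at points of the closed polydisc. -/
abbrev Lder (n : ℕ) (Φ : (Fin n → ℂ) → (Fin n → ℂ)) (x : Fin n → ℂ) :
    (Fin n → ℂ) →L[ℝ] (Fin n → ℂ) := fderivWithin ℝ Φ (closedPolydisc n) x

section
variable {n : ℕ} {Φ : (Fin n → ℂ) → (Fin n → ℂ)}

theorem Lder_cont (hsm : ContDiffOn ℝ 1 Φ (closedPolydisc n)) :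
    ContinuousOn (Lder n Φ) (closedPolydisc n) :=
  hsm.continuousOn_fderivWithin (uniqueDiff_cpd n) le_rfl

theorem Lder_has (hsm : ContDiffOn ℝ 1 Φ (closedPolydisc n)) {x : Fin n → ℂ}
    (hx : x ∈ closedPolydisc n) : HasFDerivWithinAt Φ (Lder n Φ x) (closedPolydisc n) x :=
  ((hsm.differentiableOn one_ne_zero) x hx).hasFDerivWithinAt

theorem Lder_smul (hhol : DifferentiableOn ℂ Φ (polydisc n))
    (hsm : ContDiffOn ℝ 1 Φ (closedPolydisc n)) {x : Fin n → ℂ}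
    (hx : x ∈ closedPolydisc n) (c : ℂ) (v : Fin n → ℂ) :
    Lder n Φ x (c • v) = c • Lder n Φ x v := by
  have key : EqOn (fun x => Lder n Φ x (c • v)) (fun x => c • Lder n Φ x v) (polydisc n) := by
    intro y hy
    have h1 : closedPolydisc n ∈ 𝓝 y :=
      mem_of_superset ((isOpen_polydisc n).mem_nhds hy) (polydisc_sub n)
    have h2 : DifferentiableAt ℂ Φ y := (hhol y hy).differentiableAt ((isOpen_polydisc n).mem_nhds hy)
    have h3 : Lder n Φ y = (fderiv ℂ Φ y).restrictScalars ℝ := by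
      rw [Lder, fderivWithin_of_mem_nhds h1]
      exact (h2.hasFDerivAt.restrictScalars ℝ).fderiv
    simp only [h3]
    simp
  have hc := Lder_cont hsm
  refine key.of_subset_closure (t := closedPolydisc n) ?_ ?_ (polydisc_sub n)
    (closure_polydisc n).ge hx
  · exact hc.clm_apply continuousOn_const
  · exact (hc.clm_apply continuousOn_const).const_smul c

theorem norm_Phi_le (hsm : ContDiffOn ℝ 1 Φ (closedPolydisc n))
    (hmap : ∀ z ∈ polydisc n, Φ z ∈ polydisc n) {x : Fin n → ℂ}
    (hx : x ∈ closedPolydisc n) (i : Fin n) : ‖Φ x i‖ ≤ 1 := by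
  have h : MapsTo Φ (closedPolydisc n) (closedPolydisc n) := by
    have h0 : MapsTo Φ (polydisc n) (polydisc n) := hmap
    have := h0.closure_of_continuousOn (by rw [closure_polydisc]; exact hsm.continuousOn)
    rwa [closure_polydisc] at this
  exact h hx i

theorem slice_hol (hhol : DifferentiableOn ℂ Φ (polydisc n))
    (hsm : ContDiffOn ℝ 1 Φ (closedPolydisc n)) {x v : Fin n → ℂ} {Ω : Set ℂ} (hΩ : IsOpen Ω)
    (hm : ∀ l ∈ Ω, x + l • v ∈ closedPolydisc n) :
    DifferentiableOn ℂ (fun l : ℂ => Φ (x + l • v)) Ω := by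
  intro l hl
  apply DifferentiableAt.differentiableWithinAt
  have h1 : HasFDerivAt (fun l : ℂ => x + l • v)
      (((1 : ℂ →L[ℂ] ℂ).smulRight v).restrictScalars ℝ) l := by
    have : HasFDerivAt (fun l : ℂ => x + l • v) ((1 : ℂ →L[ℂ] ℂ).smulRight v) l :=
      ((hasFDerivAt_id l).smul_const v).const_add x
    exact this.restrictScalars ℝ
  have h2 := (Lder_has hsm (hm l hl)).comp (s := Ω) l h1.hasFDerivWithinAt hm
  have h3 := h2.hasFDerivAt (hΩ.mem_nhds hl)
  have h4 : ((1 : ℂ →L[ℂ] ℂ).smulRight (Lder n Φ (x + l • v) v)).restrictScalars ℝ =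
      (Lder n Φ (x + l • v)).comp (((1 : ℂ →L[ℂ] ℂ).smulRight v).restrictScalars ℝ) := by
    refine ContinuousLinearMap.ext fun w => ?_
    simp only [ContinuousLinearMap.coe_restrictScalars', ContinuousLinearMap.smulRight_apply,
      ContinuousLinearMap.comp_apply, ContinuousLinearMap.one_apply]
    rw [Lder_smul hhol hsm (hm l hl)]
  have this : HasFDerivAt (fun l : ℂ => Φ (x + l • v))
      ((1 : ℂ →L[ℂ] ℂ).smulRight (Lder n Φ (x + l • v) v)) l :=
    hasFDerivAt_of_restrictScalars ℝ h3 h4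
  exact this.differentiableAt

theorem dir_nonpos (hsm : ContDiffOn ℝ 1 Φ (closedPolydisc n))
    (hmap : ∀ z ∈ polydisc n, Φ z ∈ polydisc n) {x v : Fin n → ℂ}
    (hx : x ∈ closedPolydisc n) (hv : x + v ∈ closedPolydisc n) {i : Fin n} (hi : ‖Φ x i‖ = 1) :
    (conj (Φ x i) * Lder n Φ x v i).re ≤ 0 := by
  set ω := Φ x i with hω
  have hmax : IsLocalMaxOn (fun z => (conj ω * Φ z i).re) (closedPolydisc n) x := by
    refine IsMaxOn.localize ?_
    intro z hz
    have h1 : (conj ω * Φ z i).re ≤ 1 := by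
      refine (Complex.re_le_norm _).trans ?_
      rw [norm_mul, RCLike.norm_conj, hi, one_mul]
      exact norm_Phi_le hsm hmap hz i
    have h2 : (conj ω * Φ x i).re = 1 := by
      rw [← hω, ← Complex.normSq_eq_conj_mul_self, Complex.normSq_eq_norm_sq, hi]; simp
    simp only [mem_ofPred_eq]
    rw [h2]; exact h1
  let T : (Fin n → ℂ) →L[ℝ] ℝ := Complex.reCLM.comp
    (((ContinuousLinearMap.mul ℝ ℂ) (conj ω)).comp (ContinuousLinearMap.proj i))
  have hd : HasFDerivWithinAt (fun z => (conj ω * Φ z i).re) (T.comp (Lder n Φ x))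
      (closedPolydisc n) x :=
    T.hasFDerivAt.comp_hasFDerivWithinAt x (Lder_has hsm hx)
  have := hmax.hasFDerivWithinAt_nonpos hd (y := v)
    (mem_posTangentConeAt_of_segment_subset ((convex_cpd n).segment_subset hx hv))
  simpa [T] using this

/-- `A_{ik} = conj(ω_i) p_k ∂_kΦ_i(p)` is real and nonnegative. -/
theorem A_real (hhol : DifferentiableOn ℂ Φ (polydisc n))
    (hsm : ContDiffOn ℝ 1 Φ (closedPolydisc n))
    (hmap : ∀ z ∈ polydisc n, Φ z ∈ polydisc n) {x : Fin n → ℂ}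
    (hx : x ∈ closedPolydisc n) {i k : Fin n} (hi : ‖Φ x i‖ = 1) (hk : ‖x k‖ = 1) :
    (conj (Φ x i) * (x k * Lder n Φ x (Pi.single k 1) i)).im = 0 ∧
    0 ≤ (conj (Φ x i) * (x k * Lder n Φ x (Pi.single k 1) i)).re := by
  set A := conj (Φ x i) * (x k * Lder n Φ x (Pi.single k 1) i) with hA
  have key : ∀ s : ℝ, 0 ≤ A.re + s * A.im := by
    intro s
    set t : ℝ := 1 / (1 + s ^ 2) with ht
    have htpos : 0 < t := by positivity
    set c : ℂ := t * (-1 + s * Complex.I) with hc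
    have hmem : x + (c * x k) • (Pi.single k 1 : Fin n → ℂ) ∈ closedPolydisc n := by
      intro j
      by_cases hj : j = k
      · subst hj
        have : (x + (c * x j) • (Pi.single j 1 : Fin n → ℂ)) j = (1 + c) * x j := by
          simp; ring
        rw [this, norm_mul, hk, mul_one, ← sq_le_one_iff₀ (norm_nonneg _), ← Complex.normSq_eq_norm_sq,
          Complex.normSq_apply]
        simp [hc]
        have : t * (1 + s ^ 2) = 1 := by rw [ht]; field_simp
        nlinarith [sq_nonneg s]
      · simpa [hj] using hx j
    have := dir_nonpos hsm hmap hx hmem hi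
    rw [Lder_smul hhol hsm hx] at this
    have e : conj (Φ x i) * ((c * x k) • Lder n Φ x (Pi.single k 1)) i = c * A := by
      simp [hA]; ring
    rw [e] at this
    have e2 : (c * A).re = - t * (A.re + s * A.im) := by
      simp [hc]; ring
    rw [e2] at this
    nlinarith
  refine ⟨?_, by simpa using key 0⟩
  by_contra h
  have h1 := key (-(A.re + 1) / A.im)
  rw [div_mul_cancel₀ _ h] at h1
  linarith

end

section
variable {n : ℕ} {Φ : (Fin n → ℂ) → (Fin n → ℂ)}

theorem unif_approx (hsm : ContDiffOn ℝ 1 Φ (closedPolydisc n)) {ε : ℝ} (hε : 0 < ε) :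
    ∃ δ > 0, ∀ x ∈ closedPolydisc n, ∀ y ∈ closedPolydisc n, ∀ z ∈ closedPolydisc n,
      dist y x < δ → dist z x < δ → ‖Φ z - Φ y - Lder n Φ x (z - y)‖ ≤ ε * ‖z - y‖ := by
  have huc := (compact_cpd n).uniformContinuousOn_of_continuous (Lder_cont hsm)
  rw [Metric.uniformContinuousOn_iff] at huc
  obtain ⟨δ, hδ, H⟩ := huc ε hε
  refine ⟨δ, hδ, fun x hx y hy z hz hyx hzx => ?_⟩
  refine Convex.norm_image_sub_le_of_norm_hasFDerivWithin_le' (𝕜 := ℝ)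
    (s := closedPolydisc n ∩ ball x δ) (f' := Lder n Φ)
    (fun u hu => (Lder_has hsm hu.1).mono inter_subset_left) (fun u hu => ?_)
    ((convex_cpd n).inter (convex_ball x δ)) ⟨hy, hyx⟩ ⟨hz, hzx⟩
  have := H u hu.1 x hx hu.2
  rw [dist_eq_norm] at this
  exact this.le

/-- The parameter domain of a slice through `p` in direction `v`. -/
def sliceDom (p v : Fin n → ℂ) : Set ℂ := {l | ∀ j, ‖p j‖ ≠ 1 → ‖p j + l * v j‖ < 1}

theorem sliceDom_open (p v : Fin n → ℂ) : IsOpen (sliceDom p v) := by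
  have : sliceDom p v = ⋂ j, {l : ℂ | ‖p j‖ ≠ 1 → ‖p j + l * v j‖ < 1} := by
    ext l; simp [sliceDom]
  rw [this]
  apply isOpen_iInter_of_finite
  intro j
  by_cases h : ‖p j‖ = 1
  · simp [h]
  · simp only [ne_eq, h, not_false_eq_true, forall_const]
    exact isOpen_lt (by fun_prop) continuous_const

theorem sliceDom_convex (p v : Fin n → ℂ) : Convex ℝ (sliceDom p v) := by
  intro x hx y hy a b ha hb hab j hj
  have h := convex_ball (0 : ℂ) 1 (x := p j + x * v j) (y := p j + y * v j)
    (by simpa using hx j hj) (by simpa using hy j hj) ha hb hab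
  have e : p j + (a • x + b • y) * v j = a • (p j + x * v j) + b • (p j + y * v j) := by
    have : (a : ℂ) + b = 1 := by exact_mod_cast hab
    simp only [Complex.real_smul]
    linear_combination - p j * this
  rw [e]
  simpa using h

theorem sliceDom_zero {p : Fin n → ℂ} (hp : p ∈ closedPolydisc n) (v : Fin n → ℂ) :
    (0 : ℂ) ∈ sliceDom p v := by
  intro j hj
  simpa using lt_of_le_of_ne (hp j) hj

theorem sliceDom_one {p p' : Fin n → ℂ} (hp : p ∈ closedPolydisc n) (hp' : p' ∈ closedPolydisc n) :
    (1 : ℂ) ∈ closure (sliceDom p (p' - p)) := by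
  have h1 : Tendsto (fun t : ℝ => (t : ℂ)) (𝓝[<] 1) (𝓝 1) := by
    have : Tendsto (fun t : ℝ => (t : ℂ)) (𝓝 1) (𝓝 ((1:ℝ):ℂ)) :=
      Complex.continuous_ofReal.continuousAt
    simpa using this.mono_left nhdsWithin_le_nhds
  refine mem_closure_of_tendsto h1 ?_
  have : Ioo (0:ℝ) 1 ∈ 𝓝[<] (1:ℝ) := Ioo_mem_nhdsLT one_pos
  filter_upwards [this] with t ht
  intro j hj
  have e : p j + (t:ℂ) * (p' - p) j = ((1 - t : ℝ) : ℂ) * p j + (t : ℂ) * p' j := by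
    simp; ring
  rw [e]
  refine (norm_add_le _ _).trans_lt ?_
  rw [norm_mul, norm_mul, Complex.norm_real, Complex.norm_real, Real.norm_of_nonneg ht.1.le,
    Real.norm_of_nonneg (by linarith [ht.2])]
  have h3 : ‖p j‖ < 1 := lt_of_le_of_ne (hp j) hj
  have h4 := hp' j
  nlinarith [ht.1, ht.2]

theorem sliceDom_mem {p v : Fin n → ℂ} (_hp : p ∈ closedPolydisc n)
    (hv : ∀ j, ‖p j‖ = 1 → v j = 0) {l : ℂ} (hl : l ∈ sliceDom p v) :
    p + l • v ∈ closedPolydisc n := by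
  intro j
  by_cases h : ‖p j‖ = 1
  · simp [hv j h, h]
  · simpa using (hl j h).le

theorem sliceDom_mem_cl {p v : Fin n → ℂ} (hp : p ∈ closedPolydisc n)
    (hv : ∀ j, ‖p j‖ = 1 → v j = 0) {l : ℂ} (hl : l ∈ closure (sliceDom p v)) :
    p + l • v ∈ closedPolydisc n := by
  have h : MapsTo (fun l : ℂ => p + l • v) (sliceDom p v) (closedPolydisc n) :=
    fun l hl => sliceDom_mem hp hv hl
  have h2 := h.closure (by fun_prop)
  rw [(compact_cpd n).isClosed.closure_eq] at h2
  exact h2 hl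

theorem const_slice (hhol : DifferentiableOn ℂ Φ (polydisc n))
    (hsm : ContDiffOn ℝ 1 Φ (closedPolydisc n))
    (hmap : ∀ z ∈ polydisc n, Φ z ∈ polydisc n) {p v : Fin n → ℂ}
    (hp : p ∈ closedPolydisc n) {i : Fin n} (hi : ‖Φ p i‖ = 1)
    (hv : ∀ j, ‖p j‖ = 1 → v j = 0) {l : ℂ} (hl : l ∈ closure (sliceDom p v)) :
    Φ (p + l • v) i = Φ p i := by
  have hd : DifferentiableOn ℂ (fun l : ℂ => Φ (p + l • v) i) (sliceDom p v) := by
    have := slice_hol hhol hsm (sliceDom_open p v) (fun l hl => sliceDom_mem hp hv hl)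
    exact fun l hl => (differentiableWithinAt_pi.1 (this l hl)) i
  have hc : ContinuousOn (fun l : ℂ => Φ (p + l • v) i) (closure (sliceDom p v)) := by
    have : ContinuousOn (fun l : ℂ => Φ (p + l • v)) (closure (sliceDom p v)) :=
      hsm.continuousOn.comp (by fun_prop) (fun l hl => sliceDom_mem_cl hp hv hl)
    exact (continuous_apply i).comp_continuousOn this
  have := Complex.eqOn_closure_of_isPreconnected_of_isMaxOn_norm (c := (0:ℂ))
    (f := fun l : ℂ => Φ (p + l • v) i)
    (sliceDom_convex p v).isPreconnected (sliceDom_open p v) ⟨hd, hc⟩ (sliceDom_zero hp v) (by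
      intro l hl
      simp only [mem_ofPred_eq, Function.comp, zero_smul, add_zero, hi]
      exact norm_Phi_le hsm hmap (sliceDom_mem hp hv hl) i) hl
  simpa using this

theorem der_slice_hol (hhol : DifferentiableOn ℂ Φ (polydisc n))
    (hsm : ContDiffOn ℝ 1 Φ (closedPolydisc n)) {p v : Fin n → ℂ}
    (hp : p ∈ closedPolydisc n) {i k : Fin n}
    (hv : ∀ j, ‖p j‖ = 1 → v j = 0) (hk : ‖p k‖ = 1) :
    DifferentiableOn ℂ (fun l : ℂ => p k * Lder n Φ (p + l • v) (Pi.single k 1) i)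
      (sliceDom p v) := by
  let w : Fin n → ℂ := p k • Pi.single k 1
  have hw : ‖w‖ = 1 := by
    simp only [w]; rw [norm_smul, hk, one_mul, Pi.norm_single, norm_one]
  let t : ℕ → ℝ := fun m => 1 / ((m : ℝ) + 1)
  have ht0 : ∀ m, 0 < t m := fun m => by positivity
  have ht1 : ∀ m, t m ≤ 1 := fun m => by
    simp only [t]; rw [div_le_one (by positivity)]; linarith [(Nat.cast_nonneg m : (0:ℝ) ≤ m)]
  have htt : Tendsto t atTop (𝓝 0) := tendsto_one_div_add_atTop_nhds_zero_nat
  have hmem : ∀ m, ∀ l ∈ sliceDom p v, (p - (t m : ℂ) • w) + l • v ∈ closedPolydisc n := by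
    intro m l hl j
    by_cases hj : j = k
    · subst hj
      have e : ((p - (t m : ℂ) • w) + l • v) j = ((1 - t m : ℝ) : ℂ) * p j := by
        simp [w, hv j hk]; ring
      rw [e, norm_mul, hk, Complex.norm_real, Real.norm_of_nonneg (by linarith [ht1 m])]
      linarith [ht0 m]
    · have := sliceDom_mem hp hv hl j
      simpa [w, hj] using this
  let g : ℕ → ℂ → ℂ := fun m l =>
    (t m : ℂ)⁻¹ * (Φ (p + l • v) i - Φ ((p - (t m : ℂ) • w) + l • v) i)
  have hg : ∀ m, DifferentiableOn ℂ (g m) (sliceDom p v) := by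
    intro m
    have h1 := slice_hol hhol hsm (sliceDom_open p v) (fun l hl => sliceDom_mem hp hv hl)
    have h2 := slice_hol hhol hsm (sliceDom_open p v) (hmem m)
    have h1' : DifferentiableOn ℂ (fun l : ℂ => Φ (p + l • v) i) (sliceDom p v) :=
      fun l hl => (differentiableWithinAt_pi.1 (h1 l hl)) i
    have h2' : DifferentiableOn ℂ (fun l : ℂ => Φ ((p - (t m : ℂ) • w) + l • v) i)
      (sliceDom p v) := fun l hl => (differentiableWithinAt_pi.1 (h2 l hl)) i
    exact (h1'.sub h2').const_mul _
  have hu : TendstoUniformlyOn g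
      (fun l : ℂ => p k * Lder n Φ (p + l • v) (Pi.single k 1) i) atTop (sliceDom p v) := by
    rw [Metric.tendstoUniformlyOn_iff]
    intro ε hε
    obtain ⟨δ, hδ, H⟩ := unif_approx hsm (half_pos hε)
    have hev : ∀ᶠ m in atTop, t m < δ := htt.eventually (gt_mem_nhds hδ)
    filter_upwards [hev] with m hm l hl
    have hK := sliceDom_mem hp hv hl
    have hdiff : (p + l • v) - ((p - (t m : ℂ) • w) + l • v) = (t m : ℂ) • w := by abel
    have := H (p + l • v) hK _ (hmem m l hl) _ hK (by
      rw [dist_comm, dist_eq_norm, hdiff, norm_smul, hw, Complex.norm_real,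
        Real.norm_of_nonneg (ht0 m).le, mul_one]; exact hm) (by simpa using hδ)
    rw [hdiff, norm_smul, hw, Complex.norm_real, Real.norm_of_nonneg (ht0 m).le, mul_one] at this
    have h2 := (norm_le_pi_norm _ i).trans this
    rw [dist_comm, dist_eq_norm]
    have htne : (t m : ℂ) ≠ 0 := by exact_mod_cast (ht0 m).ne'
    have e : g m l - p k * Lder n Φ (p + l • v) (Pi.single k 1) i = (t m : ℂ)⁻¹ *
      (Φ (p + l • v) - Φ ((p - (t m : ℂ) • w) + l • v) - Lder n Φ (p + l • v) ((t m : ℂ) • w)) i := by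
      simp only [w]
      rw [Lder_smul hhol hsm hK, Lder_smul hhol hsm hK]
      simp only [g, w, Pi.sub_apply, Pi.smul_apply, smul_eq_mul]
      field_simp
    rw [e, norm_mul, norm_inv, Complex.norm_real, Real.norm_of_nonneg (ht0 m).le]
    rw [inv_mul_lt_iff₀ (ht0 m)]
    nlinarith [ht0 m]
  exact hu.tendstoLocallyUniformlyOn.differentiableOn (Eventually.of_forall hg) (sliceDom_open p v)

theorem der_const (hhol : DifferentiableOn ℂ Φ (polydisc n))
    (hsm : ContDiffOn ℝ 1 Φ (closedPolydisc n))
    (hmap : ∀ z ∈ polydisc n, Φ z ∈ polydisc n) {p p' : Fin n → ℂ}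
    (hp : p ∈ closedPolydisc n) (hp' : p' ∈ closedPolydisc n) {i k : Fin n} (hi : ‖Φ p i‖ = 1)
    (hv : ∀ j, ‖p j‖ = 1 → p' j = p j) (hk : ‖p k‖ = 1) :
    Lder n Φ p' (Pi.single k 1) i = Lder n Φ p (Pi.single k 1) i := by
  set v := p' - p with hvd
  have hv' : ∀ j, ‖p j‖ = 1 → v j = 0 := fun j hj => by simp [hvd, hv j hj]
  have hne : Φ p i ≠ 0 := by intro h; simp [h] at hi
  have hpk : p k ≠ 0 := by intro h; simp [h] at hk
  have hd := der_slice_hol (i := i) hhol hsm hp hv' hk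
  have hd2 : DifferentiableOn ℂ (fun l : ℂ => conj (Φ p i) *
      (p k * Lder n Φ (p + l • v) (Pi.single k 1) i)) (sliceDom p v) := hd.const_mul _
  have him : ∀ l ∈ sliceDom p v, (conj (Φ p i) *
      (p k * Lder n Φ (p + l • v) (Pi.single k 1) i)).im = 0 := by
    intro l hl
    have h1 := const_slice hhol hsm hmap hp hi hv' (subset_closure hl)
    have h2 : (p + l • v) k = p k := by simp [hv' k hk]
    have := (A_real hhol hsm hmap (sliceDom_mem hp hv' hl) (i := i) (k := k) (by rw [h1, hi])
      (by rw [h2, hk])).1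
    rwa [h1, h2] at this
  obtain ⟨c, hc⟩ := AnalyticOnNhd.eq_const_of_im_eq_const (c₀ := 0)
    (hd2.analyticOnNhd (sliceDom_open p v)) him (sliceDom_open p v)
    ⟨⟨0, sliceDom_zero hp v⟩, (sliceDom_convex p v).isPreconnected⟩
  have hcont : ContinuousOn (fun l : ℂ => Lder n Φ (p + l • v) (Pi.single k 1) i)
      (closure (sliceDom p v)) := by
    have : ContinuousOn (fun l : ℂ => Lder n Φ (p + l • v)) (closure (sliceDom p v)) :=
      (Lder_cont hsm).comp (by fun_prop) (fun l hl => sliceDom_mem_cl hp hv' hl)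
    exact (continuous_apply i).comp_continuousOn (this.clm_apply continuousOn_const)
  have hE : EqOn (fun l : ℂ => Lder n Φ (p + l • v) (Pi.single k 1) i)
      (fun _ => Lder n Φ p (Pi.single k 1) i) (sliceDom p v) := by
    intro l hl
    have h1 := hc l hl
    have h0 := hc 0 (sliceDom_zero hp v)
    simp only [zero_smul, add_zero] at h0
    rw [← h0] at h1
    have hcn : conj (Φ p i) ≠ 0 := by simpa using hne
    exact mul_left_cancel₀ hpk (mul_left_cancel₀ hcn h1)
  have := hE.of_subset_closure hcont continuousOn_const subset_closure le_rfl (sliceDom_one hp hp')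
  simpa [hvd] using this

theorem der_zero (hhol : DifferentiableOn ℂ Φ (polydisc n))
    (hsm : ContDiffOn ℝ 1 Φ (closedPolydisc n))
    (hmap : ∀ z ∈ polydisc n, Φ z ∈ polydisc n) {p p' : Fin n → ℂ}
    (hp : p ∈ closedPolydisc n) (hp' : p' ∈ closedPolydisc n) {i k : Fin n} (hi : ‖Φ p i‖ = 1)
    (hv : ∀ j, ‖p j‖ = 1 → p' j = p j) (hk : ‖p k‖ ≠ 1) :
    Lder n Φ p' (Pi.single k 1) i = 0 := by
  -- a point q of the closed polydisc that differs from p' in the coordinate k only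
  have hconst : ∀ q ∈ closedPolydisc n, (∀ j, ‖p j‖ = 1 → q j = p j) → Φ q i = Φ p i := by
    intro q hq hqv
    have := const_slice hhol hsm hmap hp hi (v := q - p) (fun j hj => by simp [hqv j hj])
      (sliceDom_one hp hq)
    simpa using this
  obtain ⟨c, hc, hc1⟩ : ∃ c : ℂ, c ≠ p' k ∧ ‖c‖ ≤ 1 := by
    by_cases h : p' k = 0
    · exact ⟨1, by simp [h], by simp⟩
    · exact ⟨0, fun h' => h h'.symm, by simp⟩
  set d := c - p' k with hd
  have hdne : d ≠ 0 := sub_ne_zero.2 hc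
  have hq : p' + d • (Pi.single k 1 : Fin n → ℂ) ∈ closedPolydisc n := by
    intro j
    by_cases hj : j = k
    · subst hj; simpa [hd] using hc1
    · simpa [hj] using hp' j
  have hi' : Φ p' i = Φ p i := hconst p' hp' hv
  set u := d • (Pi.single k 1 : Fin n → ℂ) with hu
  -- derivative along the segment vanishes
  have hcurve : HasDerivWithinAt (fun t : ℝ => Φ (p' + t • u)) (Lder n Φ p' u) (Icc 0 1) 0 := by
    have h1 : HasDerivWithinAt (fun t : ℝ => p' + t • u) u (Icc 0 1) 0 := by
      have : HasDerivAt (fun t : ℝ => p' + t • u) ((1:ℝ) • u) 0 :=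
        ((hasDerivAt_id (0:ℝ)).smul_const u).const_add p'
      simpa using this.hasDerivWithinAt
    have h2 : HasFDerivWithinAt Φ (Lder n Φ p') (closedPolydisc n) (p' + (0:ℝ) • u) := by
      simpa using Lder_has hsm hp'
    refine h2.comp_hasDerivWithinAt 0 h1 ?_
    intro t ht
    have := (convex_cpd n).segment_subset hp' hq
    apply this
    rw [segment_eq_image']
    exact ⟨t, ht, by simp⟩
  have hcurve' := (hasDerivWithinAt_pi.1 hcurve) i
  have hcst : HasDerivWithinAt (fun t : ℝ => Φ (p' + t • u) i) 0 (Icc 0 1) 0 := by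
    refine (hasDerivWithinAt_const (0:ℝ) (Icc (0:ℝ) 1) (Φ p i)).congr_of_mem ?_ (by simp)
    intro t ht
    apply hconst
    · have := (convex_cpd n).segment_subset hp' hq
      apply this
      rw [segment_eq_image']
      exact ⟨t, ht, by simp⟩
    · intro j hj
      have : j ≠ k := fun h => hk (h ▸ hj)
      simp [hu, this, hv j hj]
  have huniq : UniqueDiffWithinAt ℝ (Icc (0:ℝ) 1) 0 := uniqueDiffOn_Icc one_pos 0 (by simp)
  have hz := huniq.eq_deriv _ hcurve' hcst
  rw [hu, Lder_smul hhol hsm hp'] at hz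
  simpa [hdne] using hz

/-- Full rank at every point of the closed polydisc. -/
theorem rows_indep (hhol : DifferentiableOn ℂ Φ (polydisc n))
    (hsm : ContDiffOn ℝ 1 Φ (closedPolydisc n))
    (hmap : ∀ z ∈ polydisc n, Φ z ∈ polydisc n) (hrank : rankCond n Φ) {p : Fin n → ℂ}
    (hp : p ∈ closedPolydisc n) (I : Finset (Fin n)) (hI : ∀ i ∈ I, ‖Φ p i‖ = 1) :
    LinearIndepOn ℂ (fun i : Fin n => fun j : Fin n => Lder n Φ p (Pi.single j 1) i) (I : Set (Fin n)) := by
  classical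
  rcases I.eq_empty_or_nonempty with h0 | hne
  · subst h0; simp
  let p' : Fin n → ℂ := fun j => if ‖p j‖ = 1 then p j else 1
  have hp't : p' ∈ torus n := by
    intro j; by_cases h : ‖p j‖ = 1 <;> simp [p', h]
  have hp' : p' ∈ closedPolydisc n := fun j => (hp't j).le
  have hv : ∀ j, ‖p j‖ = 1 → p' j = p j := fun j hj => by simp [p', hj]
  have hI' : ∀ i ∈ I, ‖Φ p' i‖ = 1 := by
    intro i hi
    have := const_slice hhol hsm hmap hp (hI i hi) (v := p' - p) (fun j hj => by simp [hv j hj])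
      (sliceDom_one hp hp')
    have e : Φ p' i = Φ p i := by simpa using this
    rw [e, hI i hi]
  have hr := hrank I hne p' hp't hI'
  have hM : (Matrix.of fun (i : I) (j : Fin n) => jacEntry n Φ p' i j) =
      Matrix.of fun (i : I) (j : Fin n) => Lder n Φ p (Pi.single j 1) i := by
    ext i j
    simp only [Matrix.of_apply, jacEntry]
    by_cases h : ‖p j‖ = 1
    · exact der_const hhol hsm hmap hp hp' (hI i i.2) hv h
    · have a := der_zero hhol hsm hmap hp hp' (hI i i.2) hv h
      have b := der_zero hhol hsm hmap hp hp (hI i i.2) (fun _ _ => rfl) h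
      rw [b]; exact a
  rw [hM] at hr
  rw [LinearIndepOn]
  have := linearIndependent_iff_card_eq_finrank_span (R := ℂ)
    (b := fun i : I => (fun j : Fin n => Lder n Φ p (Pi.single j 1) i))
  refine this.2 ?_
  rw [Matrix.rank_eq_finrank_span_row] at hr
  rw [Set.finrank]
  simp only [Fintype.card_coe]
  rw [← hr]
  rfl

end

theorem extend_rows {n : ℕ} : ∀ (m : ℕ) (s : Finset (Fin n)) (v : Fin n → Fin n → ℂ),
    sᶜ.card = m → LinearIndepOn ℂ v (s : Set (Fin n)) →
    ∃ w : Fin n → Fin n → ℂ, (∀ i ∈ s, w i = v i) ∧ (∀ i ∉ s, ∃ j, w i = Pi.single j 1) ∧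
      LinearIndependent ℂ w := by
  intro m
  induction m with
  | zero =>
    intro s v hs hv
    have hs' : s = Finset.univ := by
      rw [Finset.card_eq_zero] at hs
      simpa using hs
    subst hs'
    refine ⟨v, fun _ _ => rfl, fun i hi => absurd (Finset.mem_univ i) hi, ?_⟩
    simpa using hv
  | succ m ih =>
    intro s v hs hv
    obtain ⟨i0, hi0⟩ : (sᶜ).Nonempty := Finset.card_pos.1 (by omega)
    have hi0' : i0 ∉ s := by simpa using hi0
    have hspan : ∃ j, (Pi.single j 1 : Fin n → ℂ) ∉ Submodule.span ℂ (v '' (s : Set (Fin n))) := by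
      by_contra hcon
      push Not at hcon
      have htop : Submodule.span ℂ (v '' (s : Set (Fin n))) = ⊤ := by
        rw [eq_top_iff, ← (Pi.basisFun ℂ (Fin n)).span_eq, Submodule.span_le]
        rintro _ ⟨j, rfl⟩
        rw [Pi.basisFun_apply]
        exact hcon j
      have h1 : Module.finrank ℂ (Submodule.span ℂ (v '' (s : Set (Fin n)))) ≤ s.card := by
        classical
        have := finrank_span_finset_le_card (R := ℂ) (s.image v)
        rw [Finset.coe_image] at this
        exact this.trans Finset.card_image_le
      rw [htop, finrank_top] at h1
      simp at h1
      have h2 := Finset.card_compl_add_card s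
      rw [hs, Fintype.card_fin] at h2
      omega
    obtain ⟨j, hj⟩ := hspan
    let v' := Function.update v i0 (Pi.single j 1)
    have hEq : EqOn v' v (s : Set (Fin n)) := by
      intro i hi
      have : i ≠ i0 := fun h => hi0' (h ▸ hi)
      simp [v', this]
    have hv' : LinearIndepOn ℂ v' ((insert i0 s : Finset (Fin n)) : Set (Fin n)) := by
      rw [Finset.coe_insert]
      refine LinearIndepOn.insert ((linearIndepOn_congr hEq).2 hv) ?_
      rw [hEq.image_eq]
      simpa [v'] using hj
    obtain ⟨w, h1, h2, h3⟩ := ih (insert i0 s) v' (by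
      have := Finset.card_insert_of_notMem hi0'
      have a := Finset.card_compl_add_card s
      have b := Finset.card_compl_add_card (insert i0 s)
      omega) hv'
    refine ⟨w, fun i hi => ?_, fun i hi => ?_, h3⟩
    · rw [h1 i (Finset.mem_insert_of_mem hi)]; exact hEq hi
    · by_cases h : i = i0
      · subst h
        refine ⟨j, ?_⟩
        rw [h1 i (Finset.mem_insert_self _ _)]; simp [v']
      · exact h2 i (by simp [h, hi])

theorem perm_choice {n : ℕ} (I : Finset (Fin n)) (M : Fin n → Fin n → ℂ)
    (hM : LinearIndepOn ℂ M (I : Set (Fin n))) :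
    ∃ e : Equiv.Perm (Fin n), (∀ i ∈ I, M i (e i) ≠ 0) ∧
      ∀ a : Fin n → ℂ, (∀ i ∉ I, a (e i) = 0) → (∀ i ∈ I, ∑ j, M i j * a j = 0) → a = 0 := by
  obtain ⟨w, h1, h2, h3⟩ := extend_rows _ I M rfl hM
  have hu : IsUnit (Matrix.of w) := Matrix.linearIndependent_rows_iff_isUnit.1 h3
  have hdet : (Matrix.of w).det ≠ 0 := by
    rw [Matrix.isUnit_iff_isUnit_det] at hu
    exact hu.ne_zero
  rw [Matrix.det_apply] at hdet
  obtain ⟨σ, -, hσ⟩ := Finset.exists_ne_zero_of_sum_ne_zero hdet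
  have hprod : ∏ i, w (σ i) i ≠ 0 := by
    intro h
    apply hσ
    simp [h]
  rw [Finset.prod_ne_zero_iff] at hprod
  have he : ∀ i, w i (σ⁻¹ i) ≠ 0 := by
    intro i
    have := hprod (σ⁻¹ i) (Finset.mem_univ _)
    simpa using this
  refine ⟨σ⁻¹, fun i hi => ?_, fun a ha hb => ?_⟩
  · rw [← h1 i hi]; exact he i
  · have hz : (Matrix.of w).mulVec a = 0 := by
      ext i
      by_cases hi : i ∈ I
      · have := hb i hi
        rw [← h1 i hi] at this
        simpa [Matrix.mulVec, dotProduct] using this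
      · obtain ⟨j, hj⟩ := h2 i hi
        have hji : σ⁻¹ i = j := by
          by_contra hne
          apply he i
          rw [hj]; exact Pi.single_eq_of_ne hne _
        have := ha i hi
        rw [hji] at this
        simp [Matrix.mulVec, hj, this]
    exact Matrix.mulVec_injective_of_isUnit hu (by simpa using hz)

section
variable {n : ℕ} {Φ : (Fin n → ℂ) → (Fin n → ℂ)}

theorem Lder_expand (hhol : DifferentiableOn ℂ Φ (polydisc n))
    (hsm : ContDiffOn ℝ 1 Φ (closedPolydisc n)) {x : Fin n → ℂ}
    (hx : x ∈ closedPolydisc n) (v : Fin n → ℂ) (i : Fin n) :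
    Lder n Φ x v i = ∑ j, Lder n Φ x (Pi.single j 1) i * v j := by
  have hv : v = ∑ j, v j • (Pi.single j 1 : Fin n → ℂ) := by
    ext k
    simp [Finset.sum_apply, Pi.single_apply]
  conv_lhs => rw [hv]
  rw [map_sum, Finset.sum_apply]
  refine Finset.sum_congr rfl fun j _ => ?_
  rw [Lder_smul hhol hsm hx]
  simp [mul_comm]

/-- Hopf type estimate at the boundary. -/
theorem hopf (hhol : DifferentiableOn ℂ Φ (polydisc n))
    (hsm : ContDiffOn ℝ 1 Φ (closedPolydisc n))
    (hmap : ∀ z ∈ polydisc n, Φ z ∈ polydisc n) {p : Fin n → ℂ}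
    (hp : p ∈ closedPolydisc n) {i k : Fin n} (hi : ‖Φ p i‖ = 1)
    (hM : Lder n Φ p (Pi.single k 1) i ≠ 0) :
    ∃ C > (0:ℝ), ∀ᶠ z in 𝓝[closedPolydisc n] p, 1 - ‖z k‖ ^ 2 ≤ C * (1 - ‖Φ z i‖) := by
  have hk : ‖p k‖ = 1 := by
    by_contra h
    exact hM (der_zero hhol hsm hmap hp hp hi (fun _ _ => rfl) h)
  have hpk : p k ≠ 0 := by intro h; simp [h] at hk
  have hne : Φ p i ≠ 0 := by intro h; simp [h] at hi
  obtain ⟨him, hre⟩ := A_real hhol hsm hmap hp hi hk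
  set m := Lder n Φ p (Pi.single k 1) i with hm
  set a := (conj (Φ p i) * (p k * m)).re with ha
  have hapos : 0 < a := by
    refine lt_of_le_of_ne hre ?_
    intro h
    have : conj (Φ p i) * (p k * m) = 0 := Complex.ext h.symm him
    simp [hne, hpk, hM] at this
  obtain ⟨δ, hδ, H⟩ := unif_approx hsm (ε := a / 4) (by positivity)
  refine ⟨8 / a, by positivity, ?_⟩
  have hcΦ : ContinuousWithinAt (fun z => Φ z i) (closedPolydisc n) p :=
    (continuous_apply i).continuousAt.comp_continuousWithinAt (hsm.continuousOn p hp)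
  have hck : ContinuousWithinAt (fun z : Fin n → ℂ => z k) (closedPolydisc n) p :=
    (continuous_apply k).continuousWithinAt
  have hcη : ContinuousWithinAt (fun z : Fin n → ℂ => z k / (‖z k‖ : ℂ)) (closedPolydisc n) p := by
    refine hck.div (Complex.continuous_ofReal.continuousAt.comp_continuousWithinAt hck.norm) ?_
    simp [hpk]
  have hcω : ContinuousWithinAt (fun z : Fin n → ℂ => conj (Φ z i) / (‖Φ z i‖ : ℂ))
      (closedPolydisc n) p := by
    refine (Complex.continuous_conj.continuousAt.comp_continuousWithinAt hcΦ).div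
      (Complex.continuous_ofReal.continuousAt.comp_continuousWithinAt hcΦ.norm) ?_
    simp [hne]
  have e1 : ∀ᶠ z in 𝓝[closedPolydisc n] p,
      a / 2 < ((conj (Φ z i) / (‖Φ z i‖ : ℂ)) * ((z k / (‖z k‖ : ℂ)) * m)).re := by
    have hc := Complex.continuous_re.continuousAt.comp_continuousWithinAt
      (hcω.mul (hcη.mul (continuousWithinAt_const (b := m))))
    refine hc.eventually (lt_mem_nhds ?_)
    simp only [Function.comp, Pi.mul_apply, hi, hk, Complex.ofReal_one, div_one]
    rw [← ha]; linarith
  have e2 : ∀ᶠ z in 𝓝[closedPolydisc n] p, z k ≠ 0 := hck.eventually_ne hpk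
  have e3 : ∀ᶠ z in 𝓝[closedPolydisc n] p, Φ z i ≠ 0 := hcΦ.eventually_ne hne
  have e4 : ∀ᶠ z in 𝓝[closedPolydisc n] p, dist z p < δ / 2 :=
    mem_nhdsWithin_of_mem_nhds (ball_mem_nhds p (by positivity))
  filter_upwards [e1, e2, e3, e4, self_mem_nhdsWithin] with z h1 h2 h3 h4 hz
  set t := 1 - ‖z k‖ with ht
  have hzk := hz k
  have ht0 : 0 ≤ t := by linarith
  set η : ℂ := z k / (‖z k‖ : ℂ) with hη
  have hzη : z k = (‖z k‖ : ℂ) * η := by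
    have : (‖z k‖ : ℂ) ≠ 0 := by simpa using h2
    rw [hη]; field_simp
  have hηn : ‖η‖ = 1 := by
    rw [hη, norm_div, Complex.norm_real, norm_norm]
    exact div_self (by simpa using h2)
  let z' := z + ((t : ℂ) * η) • (Pi.single k 1 : Fin n → ℂ)
  have hz' : z' ∈ closedPolydisc n := by
    intro j
    by_cases hj : j = k
    · subst hj
      have : z' j = η := by
        simp only [z', Pi.add_apply, Pi.smul_apply, Pi.single_eq_same, smul_eq_mul, mul_one]
        conv_lhs => rw [hzη]
        simp [ht]; ring
      rw [this, hηn]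
    · simpa [z', hj] using hz j
  have hzz : z' - z = ((t : ℂ) * η) • (Pi.single k 1 : Fin n → ℂ) := by simp [z']
  have hnzz : ‖z' - z‖ = t := by
    rw [hzz, norm_smul, norm_mul, hηn, Pi.norm_single, norm_one, Complex.norm_real,
      Real.norm_of_nonneg ht0]; ring
  have htδ : t < δ / 2 := by
    have h5 : ‖(z - p) k‖ < δ / 2 := by
      rw [dist_eq_norm] at h4
      exact (norm_le_pi_norm _ k).trans_lt h4
    have h6 := norm_sub_norm_le (p k) (z k)
    rw [norm_sub_rev, hk] at h6
    simp only [Pi.sub_apply] at h5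
    linarith
  have hd' : dist z' p < δ := by
    calc dist z' p ≤ dist z' z + dist z p := dist_triangle _ _ _
      _ < δ := by rw [dist_eq_norm, hnzz]; linarith
  have happ := H p hp z hz z' hz' (by linarith) hd'
  rw [hnzz, hzz, Lder_smul hhol hsm hp] at happ
  have happ2 := (norm_le_pi_norm _ i).trans happ
  simp only [Pi.sub_apply, Pi.smul_apply, smul_eq_mul] at happ2
  rw [← hm] at happ2
  set ω' : ℂ := conj (Φ z i) / (‖Φ z i‖ : ℂ) with hω'
  have hω'n : ‖ω'‖ = 1 := by
    rw [hω', norm_div, Complex.norm_real, norm_norm, RCLike.norm_conj]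
    exact div_self (by simpa using h3)
  have hΦre : (ω' * Φ z i).re = ‖Φ z i‖ := by
    have : ω' * Φ z i = (‖Φ z i‖ : ℂ) := by
      have h0 : (‖Φ z i‖ : ℂ) ≠ 0 := by simpa using h3
      rw [hω', div_mul_eq_mul_div, div_eq_iff h0, ← Complex.normSq_eq_conj_mul_self,
        Complex.normSq_eq_norm_sq]
      push_cast; ring
    rw [this, Complex.ofReal_re]
  have h7 : (ω' * Φ z' i).re ≤ 1 := by
    refine (Complex.re_le_norm _).trans ?_
    rw [norm_mul, hω'n, one_mul]
    exact norm_Phi_le hsm hmap hz' i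
  have h8 : -(a / 4 * t) ≤ (ω' * (Φ z' i - Φ z i - (t : ℂ) * η * m)).re := by
    have := (Complex.abs_re_le_norm (ω' * (Φ z' i - Φ z i - (t : ℂ) * η * m)))
    rw [norm_mul, hω'n, one_mul] at this
    exact (abs_le.1 (this.trans happ2)).1
  have h9 : (ω' * (Φ z' i - Φ z i - (t : ℂ) * η * m)).re =
      (ω' * Φ z' i).re - (ω' * Φ z i).re - t * (ω' * (η * m)).re := by
    rw [show ω' * (Φ z' i - Φ z i - (t : ℂ) * η * m) = ω' * Φ z' i - ω' * Φ z i -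
      (t : ℂ) * (ω' * (η * m)) by ring]
    simp
  rw [h9, hΦre] at h8
  have h10 : t * (a / 4) ≤ 1 - ‖Φ z i‖ := by nlinarith
  have h11 : 1 - ‖z k‖ ^ 2 ≤ 2 * t := by
    rw [ht]; nlinarith [norm_nonneg (z k)]
  have h12 : 8 / a * (t * (a / 4)) ≤ 8 / a * (1 - ‖Φ z i‖) :=
    mul_le_mul_of_nonneg_left h10 (by positivity)
  have h13 : 8 / a * (t * (a / 4)) = 2 * t := by field_simp; ring
  linarith

end

section
variable {n : ℕ} {Φ : (Fin n → ℂ) → (Fin n → ℂ)}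

/-- Local coordinates: the weight variable and the tangential part of `Φ_i`. -/
def Fmap (Φ : (Fin n → ℂ) → (Fin n → ℂ)) (p : Fin n → ℂ) (I : Finset (Fin n))
    (e : Equiv.Perm (Fin n)) (z : Fin n → ℂ) : Fin n → ℂ := fun i =>
  if i ∈ I then ((1 - ‖z (e i)‖ ^ 2 : ℝ) : ℂ) +
    (((conj (Φ p i) * Φ z i).im : ℝ) : ℂ) * Complex.I else z (e i)

theorem Fmap_smooth (hsm : ContDiffOn ℝ 1 Φ (closedPolydisc n)) (p : Fin n → ℂ)
    (I : Finset (Fin n)) (e : Equiv.Perm (Fin n)) :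
    ContDiffOn ℝ 1 (Fmap Φ p I e) (closedPolydisc n) := by
  rw [contDiffOn_pi]
  intro i
  by_cases hi : i ∈ I
  · simp only [Fmap, hi, if_true]
    have h1 : ContDiff ℝ 1 (fun z : Fin n → ℂ => 1 - ‖z (e i)‖ ^ 2) :=
      contDiff_const.sub ((contDiff_apply ℝ ℂ (e i)).norm_sq ℝ)
    have h2 : ContDiffOn ℝ 1 (fun z => Φ z i) (closedPolydisc n) := (contDiffOn_pi.1 hsm) i
    have h3 : ContDiffOn ℝ 1 (fun z => (conj (Φ p i) * Φ z i).im) (closedPolydisc n) :=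
      Complex.imCLM.contDiff.comp_contDiffOn (contDiffOn_const.mul h2)
    exact (Complex.ofRealCLM.contDiff.comp_contDiffOn h1.contDiffOn).add
      ((Complex.ofRealCLM.contDiff.comp_contDiffOn h3).mul contDiffOn_const)
  · simp only [Fmap, hi, if_false]
    exact (contDiff_apply ℝ ℂ (e i)).contDiffOn

theorem Fmap_der_inj (hhol : DifferentiableOn ℂ Φ (polydisc n))
    (hsm : ContDiffOn ℝ 1 Φ (closedPolydisc n))
    (hmap : ∀ z ∈ polydisc n, Φ z ∈ polydisc n) {p : Fin n → ℂ}
    (hp : p ∈ closedPolydisc n) (I : Finset (Fin n)) (hI : ∀ i ∈ I, ‖Φ p i‖ = 1)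
    (e : Equiv.Perm (Fin n)) (he : ∀ i ∈ I, Lder n Φ p (Pi.single (e i) 1) i ≠ 0)
    (hker : ∀ a : Fin n → ℂ, (∀ i ∉ I, a (e i) = 0) →
      (∀ i ∈ I, ∑ j, Lder n Φ p (Pi.single j 1) i * a j = 0) → a = 0)
    {v : Fin n → ℂ} (hv : Lder n (Fmap Φ p I e) p v = 0) : v = 0 := by
  have hF := Lder_has (Fmap_smooth hsm p I e) hp
  have hu : UniqueDiffWithinAt ℝ (closedPolydisc n) p := uniqueDiff_cpd n p hp
  have hFi : ∀ i, HasFDerivWithinAt (fun z => Fmap Φ p I e z i)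
      ((ContinuousLinearMap.proj (R := ℝ) i).comp (Lder n (Fmap Φ p I e) p))
      (closedPolydisc n) p := fun i =>
    (ContinuousLinearMap.proj (R := ℝ) (φ := fun _ : Fin n => ℂ) i).hasFDerivAt.comp_hasFDerivWithinAt p hF
  have hk : ∀ i ∈ I, ‖p (e i)‖ = 1 := by
    intro i hi
    by_contra h
    exact he i hi (der_zero hhol hsm hmap hp hp (hI i hi) (fun _ _ => rfl) h)
  have h1 : ∀ i ∉ I, v (e i) = 0 := by
    intro i hi
    have a : HasFDerivWithinAt (fun z => Fmap Φ p I e z i)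
        (ContinuousLinearMap.proj (R := ℝ) (φ := fun _ : Fin n => ℂ) (e i)) (closedPolydisc n) p := by
      have : (fun z => Fmap Φ p I e z i) = fun z => z (e i) := by
        ext z; simp [Fmap, hi]
      rw [this]
      exact (ContinuousLinearMap.proj (R := ℝ) (φ := fun _ : Fin n => ℂ) (e i)).hasFDerivWithinAt
    have := congrArg (fun T => T v) (hu.eq (hFi i) a)
    simp only [ContinuousLinearMap.comp_apply, hv] at this
    simpa using this.symm
  have h2 : ∀ i ∈ I, (conj (p (e i)) * v (e i)).re = 0 := by
    intro i hi
    have a := Complex.reCLM.hasFDerivAt.comp_hasFDerivWithinAt p (hFi i)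
    have b : HasFDerivWithinAt (fun z : Fin n → ℂ => 1 - ‖z (e i)‖ ^ 2)
        (-(2 • (innerSL ℝ (p (e i))).comp
          (ContinuousLinearMap.proj (R := ℝ) (φ := fun _ : Fin n => ℂ) (e i))))
        (closedPolydisc n) p := by
      have := (ContinuousLinearMap.proj (R := ℝ) (φ := fun _ : Fin n => ℂ) (e i)).hasFDerivAt
        (x := p)
      exact (this.norm_sq.const_sub 1).hasFDerivWithinAt
    have c : (Complex.reCLM ∘ fun z => Fmap Φ p I e z i) = fun z => 1 - ‖z (e i)‖ ^ 2 := by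
      ext z; simp [Fmap, hi, -Complex.ofReal_pow, -Complex.ofReal_sub]
    rw [c] at a
    have := congrArg (fun T => T v) (hu.eq a b)
    simp only [ContinuousLinearMap.comp_apply, hv] at this
    simp [Complex.inner, mul_comm] at this ⊢
    linarith
  have h3 : ∀ i ∈ I, (conj (Φ p i) * Lder n Φ p v i).im = 0 := by
    intro i hi
    have a := Complex.imCLM.hasFDerivAt.comp_hasFDerivWithinAt p (hFi i)
    let T : (Fin n → ℂ) →L[ℝ] ℝ := Complex.imCLM.comp
      (((ContinuousLinearMap.mul ℝ ℂ) (conj (Φ p i))).comp (ContinuousLinearMap.proj i))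
    have b : HasFDerivWithinAt (fun z => (conj (Φ p i) * Φ z i).im) (T.comp (Lder n Φ p))
        (closedPolydisc n) p :=
      T.hasFDerivAt.comp_hasFDerivWithinAt p (Lder_has hsm hp)
    have c : (Complex.imCLM ∘ fun z => Fmap Φ p I e z i) =
        fun z => (conj (Φ p i) * Φ z i).im := by
      ext z
      simp only [Function.comp, Fmap, hi, if_true, Complex.imCLM_apply, Complex.add_im,
        Complex.ofReal_im, Complex.im_ofReal_mul, Complex.I_im]
      ring
    rw [c] at a
    have := congrArg (fun T => T v) (hu.eq a b)
    simp only [ContinuousLinearMap.comp_apply, hv] at this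
    simpa [T] using this.symm
  -- tangential
  have htan : ∀ k, ∃ a : ℝ, v k = Complex.I * a * p k := by
    intro k
    obtain ⟨i, rfl⟩ := e.surjective k
    by_cases hi : i ∈ I
    · refine ⟨(conj (p (e i)) * v (e i)).im, ?_⟩
      have hre := h2 i hi
      have e1 : conj (p (e i)) * v (e i) = Complex.I * ((conj (p (e i)) * v (e i)).im : ℂ) := by
        apply Complex.ext
        · rw [hre]; simp
        · simp
      have e2 : p (e i) * conj (p (e i)) = 1 := by
        rw [Complex.mul_conj, Complex.normSq_eq_norm_sq, hk i hi]; simp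
      rw [← e1]
      linear_combination (-(v (e i))) * e2
    · exact ⟨0, by simp [h1 i hi]⟩
  choose a ha using htan
  apply hker v h1
  intro i hi
  have hexp := Lder_expand hhol hsm hp v i
  rw [← hexp]
  have hz : conj (Φ p i) * Lder n Φ p v i = 0 := by
    apply Complex.ext _ (by simpa using h3 i hi)
    rw [hexp, Finset.mul_sum, Complex.re_sum, Complex.zero_re]
    refine Finset.sum_eq_zero fun j _ => ?_
    by_cases hj : ‖p j‖ = 1
    · have hAr := (A_real hhol hsm hmap hp (hI i hi) hj).1
      have : conj (Φ p i) * (Lder n Φ p (Pi.single j 1) i * v j) =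
          (a j : ℂ) * (Complex.I * (conj (Φ p i) * (p j * Lder n Φ p (Pi.single j 1) i))) := by
        rw [ha j]; ring
      rw [this, Complex.re_ofReal_mul, Complex.I_mul_re, hAr]; simp
    · rw [der_zero hhol hsm hmap hp hp (hI i hi) (fun _ _ => rfl) hj]; simp
  have hne : conj (Φ p i) ≠ 0 := by
    intro h
    have h' := hI i hi
    rw [← RCLike.norm_conj, h] at h'
    simp at h'
  exact (mul_eq_zero.1 hz).resolve_left hne

theorem push_bound {F : (Fin n → ℂ) → (Fin n → ℂ)} (hF : ContDiffOn ℝ 1 F (closedPolydisc n))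
    {p : Fin n → ℂ} (hp : p ∈ closedPolydisc n) (hinj : ∀ v, Lder n F p v = 0 → v = 0) :
    ∃ C : ℝ≥0∞, C ≠ ∞ ∧ ∃ ε > 0, ∀ g : (Fin n → ℂ) → ℝ≥0∞, Measurable g →
      ∫⁻ z in polydisc n ∩ ball p ε, g (F z) ≤ C * ∫⁻ z, g z := by
  set A := Lder n F p with hA
  have hdet : A.det ≠ 0 := by
    intro h
    have := LinearMap.bot_lt_ker_of_det_eq_zero (f := (A : (Fin n → ℂ) →ₗ[ℝ] (Fin n → ℂ))) h
    apply this.ne'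
    rw [LinearMap.ker_eq_bot']
    exact hinj
  set m : NNReal := ⟨|A.det| / 2, by positivity⟩ with hm
  have hmpos : 0 < m := by
    have : 0 < |A.det| / 2 := by positivity
    exact this
  have hmlt : (m : ℝ≥0∞) < ENNReal.ofReal |A.det| := by
    rw [← ENNReal.ofReal_coe_nnreal, ENNReal.ofReal_lt_ofReal_iff (by positivity)]
    have : 0 < |A.det| := by positivity
    change |A.det| / 2 < _
    linarith
  have hev := mul_le_addHaar_image_of_lt_det (volume : Measure (Fin n → ℂ)) A hmlt
  obtain ⟨δ, hδpos, hδ⟩ : ∃ δ : NNReal, 0 < δ ∧ ∀ (s : Set (Fin n → ℂ)) (f : (Fin n → ℂ) → (Fin n → ℂ)),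
      ApproximatesLinearOn f A s δ → (m : ℝ≥0∞) * volume s ≤ volume (f '' s) := by
    obtain ⟨δ, h1, h2⟩ := (hev.and self_mem_nhdsWithin).exists
    exact ⟨δ, h2, h1⟩
  obtain ⟨ε, hε, H⟩ := unif_approx hF (ε := δ) (by exact_mod_cast hδpos)
  have hU : MeasurableSet (polydisc n ∩ ball p ε) :=
    (isOpen_polydisc n).measurableSet.inter measurableSet_ball
  have hae : AEMeasurable F (volume.restrict (polydisc n ∩ ball p ε)) :=
    (hF.continuousOn.mono (inter_subset_left.trans (polydisc_sub n))).aemeasurable hU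
  refine ⟨(m : ℝ≥0∞)⁻¹, by simpa using hmpos.ne', ε, hε, fun g hg => ?_⟩
  have hle : Measure.map F (volume.restrict (polydisc n ∩ ball p ε)) ≤ (m : ℝ≥0∞)⁻¹ • volume := by
    rw [Measure.le_iff]
    intro B hB
    rw [Measure.map_apply_of_aemeasurable hae hB, Measure.restrict_apply' hU, Measure.smul_apply,
      smul_eq_mul]
    have h1 := hδ (F ⁻¹' B ∩ (polydisc n ∩ ball p ε)) F (by
      intro x hx y hy
      exact H p hp y (polydisc_sub n hy.2.1) x (polydisc_sub n hx.2.1) hy.2.2 hx.2.2)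
    have h2 : volume (F '' (F ⁻¹' B ∩ (polydisc n ∩ ball p ε))) ≤ volume B := by
      apply measure_mono
      rintro _ ⟨x, hx, rfl⟩
      exact hx.1
    have h3 := h1.trans h2
    rw [mul_comm, ← div_eq_mul_inv, ENNReal.le_div_iff_mul_le (by simp [hmpos.ne']) (by simp)]
    rwa [mul_comm]
  calc ∫⁻ z in polydisc n ∩ ball p ε, g (F z)
      = ∫⁻ w, g w ∂(Measure.map F (volume.restrict (polydisc n ∩ ball p ε))) := by
        rw [lintegral_map' hg.aemeasurable hae]
    _ ≤ ∫⁻ w, g w ∂((m : ℝ≥0∞)⁻¹ • volume) := lintegral_mono' hle le_rfl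
    _ = _ := by rw [lintegral_smul_measure]; rfl

end

theorem lintegral_pi_prod : ∀ (n : ℕ) (g : Fin n → ℂ → ℝ≥0∞), (∀ i, Measurable (g i)) →
    ∫⁻ z : Fin n → ℂ, ∏ i, g i (z i) = ∏ i, ∫⁻ w, g i w := by
  intro n
  induction n with
  | zero =>
    intro g _
    simp [lintegral_const, volume_pi, Measure.pi_of_empty]
  | succ n ih =>
    intro g hg
    have hmp := volume_preserving_piFinSuccAbove (fun _ : Fin (n+1) => ℂ) 0
    have h1 : ∫⁻ z : Fin (n+1) → ℂ, ∏ i, g i (z i) =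
        ∫⁻ q : ℂ × (Fin n → ℂ), g 0 q.1 * ∏ i : Fin n, g i.succ (q.2 i) := by
      rw [← hmp.lintegral_comp]
      · refine lintegral_congr fun z => ?_
        rw [Fin.prod_univ_succ]
        simp [MeasurableEquiv.piFinSuccAbove, Fin.insertNthEquiv, Fin.tail]
      · refine ((hg 0).comp measurable_fst).mul ?_
        refine Finset.measurable_prod _ fun i _ => ?_
        exact (hg i.succ).comp ((measurable_pi_apply i).comp measurable_snd)
    rw [h1]
    have h2 := lintegral_prod_mul (μ := (volume : Measure ℂ)) (ν := (volume : Measure (Fin n → ℂ)))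
      (f := g 0) (g := fun y => ∏ i : Fin n, g i.succ (y i)) (hg 0).aemeasurable
      (Finset.measurable_prod _ fun i _ => (hg i.succ).comp (measurable_pi_apply i)).aemeasurable
    rw [Measure.volume_eq_prod, h2, ih _ (fun i => hg i.succ), Fin.prod_univ_succ]

theorem lintegral_rpow_le {β : ℝ} (hβ : -1 < β) {c : ℝ} (hc : 0 ≤ c) :
    ∫⁻ x in Ioc 0 c, ENNReal.ofReal ((β + 1) * x ^ β / Real.pi) =
      ENNReal.ofReal (c ^ (β + 1) / Real.pi) := by
  have hintg : IntervalIntegrable (fun x : ℝ => (β + 1) * x ^ β / Real.pi) volume 0 c :=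
    ((intervalIntegral.intervalIntegrable_rpow' hβ).const_mul _).div_const _
  rw [← ofReal_integral_eq_lintegral_ofReal]
  · rw [← intervalIntegral.integral_of_le hc]
    congr 1
    rw [intervalIntegral.integral_div, intervalIntegral.integral_const_mul, integral_rpow (Or.inl hβ),
      Real.zero_rpow (by linarith)]
    have : β + 1 ≠ 0 := by linarith
    field_simp
    ring
  · exact (intervalIntegrable_iff_integrableOn_Ioc_of_le hc).1 hintg
  · filter_upwards [ae_restrict_mem measurableSet_Ioc] with x hx
    have : 0 < β + 1 := by linarith
    have := hx.1
    simp only [Pi.zero_apply]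
    positivity

/-- The strip weight. -/
def gStrip (β c v d : ℝ) (w : ℂ) : ℝ≥0∞ :=
  (Ioc 0 c).indicator (fun x => ENNReal.ofReal ((β + 1) * x ^ β / Real.pi)) w.re *
    (Ioo (v - d) (v + d)).indicator 1 w.im

theorem gStrip_meas (β c v d : ℝ) : Measurable (gStrip β c v d) := by
  unfold gStrip
  refine Measurable.mul ?_ ?_
  · have : Measurable ((Ioc 0 c).indicator (fun x : ℝ => ENNReal.ofReal ((β + 1) * x ^ β / Real.pi))) :=
      Measurable.indicator (by fun_prop) measurableSet_Ioc
    exact this.comp Complex.measurable_re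
  · have : Measurable ((Ioo (v - d) (v + d)).indicator (1 : ℝ → ℝ≥0∞)) :=
      measurable_one.indicator measurableSet_Ioo
    exact this.comp Complex.measurable_im

theorem gStrip_lintegral {β : ℝ} (hβ : -1 < β) {c : ℝ} (hc : 0 ≤ c) (v d : ℝ) :
    ∫⁻ w, gStrip β c v d w = ENNReal.ofReal (c ^ (β + 1) / Real.pi) * ENNReal.ofReal (2 * d) := by
  have hmp := Complex.volume_preserving_equiv_real_prod
  have h1 : ∫⁻ w, gStrip β c v d w = ∫⁻ q : ℝ × ℝ,
      (Ioc 0 c).indicator (fun x => ENNReal.ofReal ((β + 1) * x ^ β / Real.pi)) q.1 *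
      (Ioo (v - d) (v + d)).indicator 1 q.2 := by
    rw [← hmp.lintegral_comp]
    · rfl
    · refine Measurable.mul ?_ ?_
      · have : Measurable ((Ioc 0 c).indicator (fun x : ℝ => ENNReal.ofReal ((β + 1) * x ^ β / Real.pi))) :=
          Measurable.indicator (by fun_prop) measurableSet_Ioc
        exact this.comp measurable_fst
      · have : Measurable ((Ioo (v - d) (v + d)).indicator (1 : ℝ → ℝ≥0∞)) :=
          measurable_one.indicator measurableSet_Ioo
        exact this.comp measurable_snd
  rw [h1, Measure.volume_eq_prod, lintegral_prod_mul]
  · rw [lintegral_indicator measurableSet_Ioc, lintegral_rpow_le hβ hc,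
      lintegral_indicator_one measurableSet_Ioo, Real.volume_Ioo]
    congr 2; ring
  · exact (Measurable.indicator (by fun_prop) measurableSet_Ioc).aemeasurable
  · exact (measurable_one.indicator measurableSet_Ioo).aemeasurable

/-- The disc weight. -/
def gDisc (β : ℝ) (w : ℂ) : ℝ≥0∞ :=
  (ball (0:ℂ) 1).indicator (fun w => ENNReal.ofReal ((β + 1) * (1 - ‖w‖ ^ 2) ^ β / Real.pi)) w

theorem gDisc_meas (β : ℝ) : Measurable (gDisc β) :=
  Measurable.indicator (by fun_prop) measurableSet_ball

theorem gDisc_lintegral {β : ℝ} (hβ : -1 < β) : ∫⁻ w, gDisc β w ≠ ∞ := by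
  rw [← Complex.lintegral_comp_polarCoord_symm]
  set b := min β 0 with hb
  have hb1 : -1 < b := lt_min hβ (by norm_num)
  have hle : ∫⁻ q in polarCoord.target, ENNReal.ofReal q.1 • gDisc β (Complex.polarCoord.symm q) ≤
      ∫⁻ q : ℝ × ℝ, (Ioo (0:ℝ) 1).indicator
        (fun r => ENNReal.ofReal ((β + 1) * (1 - r) ^ b / Real.pi)) q.1 *
        (Ioo (-Real.pi) Real.pi).indicator 1 q.2 := by
    rw [← lintegral_indicator polarCoord.open_target.measurableSet]
    refine lintegral_mono fun q => ?_
    by_cases hq : q ∈ polarCoord.target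
    · rw [indicator_of_mem hq]
      rw [polarCoord_target] at hq
      have h1 : 0 < q.1 := hq.1
      have hn : ‖Complex.polarCoord.symm q‖ = q.1 := by
        rw [Complex.norm_polarCoord_symm, abs_of_pos h1]
      by_cases hq1 : q.1 < 1
      · have hmem : Complex.polarCoord.symm q ∈ ball (0:ℂ) 1 := by
          rw [mem_ball_zero_iff, hn]; exact hq1
        simp only [gDisc]
        rw [indicator_of_mem hmem, indicator_of_mem (show q.1 ∈ Ioo (0:ℝ) 1 from ⟨h1, hq1⟩),
          indicator_of_mem hq.2, hn]
        simp only [Pi.one_apply, mul_one, smul_eq_mul]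
        refine (mul_le_of_le_one_left (by simp) (by simpa using hq1.le)).trans ?_
        apply ENNReal.ofReal_le_ofReal
        have hβ1 : 0 < β + 1 := by linarith
        have hbase : (1 - q.1 ^ 2) ^ β ≤ (1 - q.1) ^ b := by
          have hp : 0 < 1 - q.1 ^ 2 := by nlinarith
          calc (1 - q.1 ^ 2) ^ β ≤ (1 - q.1 ^ 2) ^ b :=
                Real.rpow_le_rpow_of_exponent_ge hp (by nlinarith) (min_le_left _ _)
            _ ≤ (1 - q.1) ^ b :=
                Real.rpow_le_rpow_of_nonpos (by linarith) (by nlinarith) (min_le_right _ _)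
        gcongr
      · have hmem : Complex.polarCoord.symm q ∉ ball (0:ℂ) 1 := by
          rw [mem_ball_zero_iff, hn]; exact hq1
        simp only [gDisc]
        rw [indicator_of_notMem hmem]; simp
    · rw [indicator_of_notMem hq]; exact zero_le
  refine ne_top_of_le_ne_top ?_ hle
  rw [Measure.volume_eq_prod, lintegral_prod_mul]
  · apply ENNReal.mul_ne_top
    · rw [lintegral_indicator measurableSet_Ioo]
      have hintg : IntervalIntegrable (fun x : ℝ => (β + 1) * (1 - x) ^ b / Real.pi) volume 0 1 := by
        have := (intervalIntegral.intervalIntegrable_rpow' hb1 (a := 0) (b := 1)).comp_sub_left 1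
        simp only [sub_zero, sub_self] at this
        exact (this.symm.const_mul _).div_const _
      have hintg2 := (intervalIntegrable_iff_integrableOn_Ioo_of_le zero_le_one).1 hintg
      exact hintg2.lintegral_lt_top.ne
    · rw [lintegral_indicator_one measurableSet_Ioo, Real.volume_Ioo]; simp
  · exact (Measurable.indicator (by fun_prop) measurableSet_Ioo).aemeasurable
  · exact (measurable_one.indicator measurableSet_Ioo).aemeasurable

section
variable {n : ℕ} {Φ : (Fin n → ℂ) → (Fin n → ℂ)}

/-- The preimage sets in the Carleson condition. -/
def carl (Φ : (Fin n → ℂ) → (Fin n → ℂ)) (u : Fin n → ℂ) : Set (Fin n → ℂ) :=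
  {z | z ∈ polydisc n ∧ ∀ i, ‖Φ z i - u i‖ < 1 - ‖u i‖ ^ 2}

theorem carl_open (hsm : ContDiffOn ℝ 1 Φ (closedPolydisc n)) (u : Fin n → ℂ) :
    IsOpen (carl Φ u) := by
  have h := (hsm.continuousOn.mono (polydisc_sub n)).isOpen_inter_preimage (isOpen_polydisc n)
    (t := {w : Fin n → ℂ | ∀ i, ‖w i - u i‖ < 1 - ‖u i‖ ^ 2}) (by
      have : {w : Fin n → ℂ | ∀ i, ‖w i - u i‖ < 1 - ‖u i‖ ^ 2} =
        ⋂ i, {w : Fin n → ℂ | ‖w i - u i‖ < 1 - ‖u i‖ ^ 2} := by ext; simp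
      rw [this]
      exact isOpen_iInter_of_finite fun i => isOpen_lt (by fun_prop) continuous_const)
  exact h

theorem carl_bound {u z : Fin n → ℂ} (hz : z ∈ carl Φ u) (hu : u ∈ polydisc n) (i : Fin n) :
    1 - ‖Φ z i‖ ≤ 2 * (1 - ‖u i‖ ^ 2) := by
  have h1 := hz.2 i
  have h2 := hu i
  have h3 := norm_sub_norm_le (u i) (Φ z i)
  rw [norm_sub_rev] at h3
  nlinarith [norm_nonneg (u i)]

theorem local_carleson (hhol : DifferentiableOn ℂ Φ (polydisc n))
    (hsm : ContDiffOn ℝ 1 Φ (closedPolydisc n))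
    (hmap : ∀ z ∈ polydisc n, Φ z ∈ polydisc n) (hrank : rankCond n Φ) {β : ℝ} (hβ : -1 < β)
    {p : Fin n → ℂ} (hp : p ∈ closedPolydisc n) :
    ∃ ε > 0, ∃ C : ℝ≥0∞, C ≠ ∞ ∧ ∀ u ∈ polydisc n,
      Vbeta n β (carl Φ u ∩ ball p ε) ≤
        C * ∏ i, ENNReal.ofReal ((1 - ‖u i‖ ^ 2) ^ (2 + β)) := by
  classical
  let I : Finset (Fin n) := Finset.univ.filter fun i => ‖Φ p i‖ = 1
  have hI : ∀ i ∈ I, ‖Φ p i‖ = 1 := fun i hi => (Finset.mem_filter.1 hi).2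
  have hI' : ∀ i ∉ I, ‖Φ p i‖ < 1 := fun i hi =>
    lt_of_le_of_ne (norm_Phi_le hsm hmap hp i) fun h => hi (by simp [I, h])
  obtain ⟨e, he, hker⟩ := perm_choice I _ (rows_indep hhol hsm hmap hrank hp I hI)
  have hβ1 : 0 < β + 1 := by linarith
  -- Hopf constants
  have hH : ∀ i, ∃ C > (0:ℝ), ∀ᶠ z in 𝓝[closedPolydisc n] p,
      i ∈ I → 1 - ‖z (e i)‖ ^ 2 ≤ C * (1 - ‖Φ z i‖) := by
    intro i
    by_cases hi : i ∈ I
    · obtain ⟨C, hC, h⟩ := hopf hhol hsm hmap hp (hI i hi) (he i hi)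
      exact ⟨C, hC, h.mono fun z hz _ => hz⟩
    · exact ⟨1, one_pos, Eventually.of_forall fun z h => absurd h hi⟩
  choose c hc hH using hH
  let s : Fin n → ℝ := fun i => (1 + ‖Φ p i‖) / 2
  have hS : ∀ i, ∀ᶠ z in 𝓝[closedPolydisc n] p, i ∉ I → ‖Φ z i‖ < s i := by
    intro i
    by_cases hi : i ∈ I
    · exact Eventually.of_forall fun z h => absurd hi h
    · have hcΦ : ContinuousWithinAt (fun z => ‖Φ z i‖) (closedPolydisc n) p :=
        ((continuous_apply i).continuousAt.comp_continuousWithinAt (hsm.continuousOn p hp)).norm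
      have := hcΦ.eventually (gt_mem_nhds (show ‖Φ p i‖ < s i by
        have := hI' i hi; simp only [s]; linarith))
      exact this.mono fun z hz _ => hz
  have hev := (eventually_all.2 hH).and (eventually_all.2 hS)
  obtain ⟨ε1, hε1, hev⟩ := Metric.mem_nhdsWithin_iff.1 hev
  obtain ⟨Cm, hCm, ε2, hε2, hpush⟩ := push_bound (Fmap_smooth hsm p I e) hp
    (fun v hv => Fmap_der_inj hhol hsm hmap hp I hI e he hker hv)
  let D : Fin n → ℝ≥0∞ := fun i =>
    if i ∈ I then ENNReal.ofReal (2 * (2 * c i) ^ (β + 1) / Real.pi)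
    else (∫⁻ w, gDisc β w) * ENNReal.ofReal (((1 - s i) / 2) ^ (-(2 + β)))
  have hD : ∀ i, D i ≠ ∞ := by
    intro i
    by_cases hi : i ∈ I
    · simp [D, hi]
    · simp only [D, hi, if_false]
      exact ENNReal.mul_ne_top (gDisc_lintegral hβ) ENNReal.ofReal_ne_top
  refine ⟨min ε1 ε2, lt_min hε1 hε2, Cm * ∏ i, D i,
    ENNReal.mul_ne_top hCm (ENNReal.prod_ne_top fun i _ => hD i), fun u hu => ?_⟩
  set S := carl Φ u ∩ ball p (min ε1 ε2) with hSdef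
  rcases S.eq_empty_or_nonempty with h0 | ⟨z0, hz0⟩
  · rw [h0]; simp
  have hSm : MeasurableSet S := (carl_open hsm u).measurableSet.inter measurableSet_ball
  have hδ : ∀ i, 0 < 1 - ‖u i‖ ^ 2 := fun i => by
    have := hu i; nlinarith [norm_nonneg (u i)]
  have hSprop : ∀ z ∈ S, (∀ i, i ∈ I → 1 - ‖z (e i)‖ ^ 2 ≤ c i * (1 - ‖Φ z i‖)) ∧
      (∀ i, i ∉ I → ‖Φ z i‖ < s i) := by
    intro z hz
    have hzz : z ∈ ball p ε1 ∩ closedPolydisc n :=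
      ⟨ball_subset_ball (min_le_left _ _) hz.2, polydisc_sub n hz.1.1⟩
    exact hev hzz
  let g : Fin n → ℂ → ℝ≥0∞ := fun i =>
    if i ∈ I then gStrip β (c i * (2 * (1 - ‖u i‖ ^ 2))) (conj (Φ p i) * u i).im (1 - ‖u i‖ ^ 2)
    else gDisc β
  have hg : ∀ i, Measurable (g i) := by
    intro i
    by_cases hi : i ∈ I
    · simp only [g, hi, if_true]; exact gStrip_meas _ _ _ _
    · simp only [g, hi, if_false]; exact gDisc_meas _
  have hgi : ∀ i, ∫⁻ w, g i w ≤ D i * ENNReal.ofReal ((1 - ‖u i‖ ^ 2) ^ (2 + β)) := by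
    intro i
    have hδi := hδ i
    by_cases hi : i ∈ I
    · simp only [g, D, hi, if_true]
      have hci := hc i
      rw [gStrip_lintegral hβ (by positivity), ← ENNReal.ofReal_mul (by positivity),
        ← ENNReal.ofReal_mul (by positivity)]
      apply le_of_eq
      congr 1
      have h2 : (1 - ‖u i‖ ^ 2) ^ (2 + β) = (1 - ‖u i‖ ^ 2) ^ (β + 1) * (1 - ‖u i‖ ^ 2) := by
        rw [show (2 + β) = (β + 1) + 1 by ring, Real.rpow_add_one hδi.ne']
      rw [show c i * (2 * (1 - ‖u i‖ ^ 2)) = (2 * c i) * (1 - ‖u i‖ ^ 2) by ring,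
        Real.mul_rpow (by positivity) hδi.le, h2]
      ring
    · simp only [g, D, hi, if_false]
      rw [mul_assoc, ← ENNReal.ofReal_mul (by
        have := hI' i hi
        apply Real.rpow_nonneg; simp only [s]; linarith)]
      refine le_mul_of_one_le_right zero_le ?_
      rw [ENNReal.one_le_ofReal]
      have h1 := carl_bound hz0.1 hu i
      have h2 := (hSprop z0 hz0).2 i hi
      have h3 : 0 < (1 - s i) / 2 := by
        have := hI' i hi
        simp only [s]; linarith
      have h4 : (1 - s i) / 2 ≤ 1 - ‖u i‖ ^ 2 := by linarith
      rw [Real.rpow_neg h3.le, inv_mul_eq_div, one_le_div (by positivity)]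
      exact Real.rpow_le_rpow h3.le h4 (by linarith)
  have hpt : ∀ z ∈ S, ENNReal.ofReal (∏ j, ((β + 1) * (1 - ‖z j‖ ^ 2) ^ β / Real.pi)) ≤
      ∏ i, g i (Fmap Φ p I e z i) := by
    intro z hz
    have hzp : z ∈ polydisc n := hz.1.1
    have hzpos : ∀ j, 0 < 1 - ‖z j‖ ^ 2 := fun j => by
      have := hzp j; nlinarith [norm_nonneg (z j)]
    rw [ENNReal.ofReal_prod_of_nonneg (fun j _ => by
      have := hzpos j; positivity)]
    rw [← Equiv.prod_comp e]
    refine Finset.prod_le_prod' fun i _ => ?_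
    by_cases hi : i ∈ I
    · simp only [g, Fmap, hi, if_true, gStrip]
      have hre : (((1 - ‖z (e i)‖ ^ 2 : ℝ) : ℂ) +
        (((conj (Φ p i) * Φ z i).im : ℝ) : ℂ) * Complex.I).re = 1 - ‖z (e i)‖ ^ 2 := by
        rw [Complex.add_re, Complex.ofReal_re, Complex.re_ofReal_mul]; simp
      have him : (((1 - ‖z (e i)‖ ^ 2 : ℝ) : ℂ) +
        (((conj (Φ p i) * Φ z i).im : ℝ) : ℂ) * Complex.I).im = (conj (Φ p i) * Φ z i).im := by
        rw [Complex.add_im, Complex.ofReal_im, Complex.im_ofReal_mul]; simp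
      rw [hre, him]
      have hb := carl_bound hz.1 hu i
      have hb2 := (hSprop z hz).1 i hi
      have m1 : 1 - ‖z (e i)‖ ^ 2 ∈ Ioc 0 (c i * (2 * (1 - ‖u i‖ ^ 2))) :=
        ⟨hzpos _, hb2.trans (mul_le_mul_of_nonneg_left hb (hc i).le)⟩
      have m2 : (conj (Φ p i) * Φ z i).im ∈ Ioo ((conj (Φ p i) * u i).im - (1 - ‖u i‖ ^ 2))
          ((conj (Φ p i) * u i).im + (1 - ‖u i‖ ^ 2)) := by
        have h1 := Complex.abs_im_le_norm (conj (Φ p i) * (Φ z i - u i))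
        rw [norm_mul, RCLike.norm_conj, hI i hi, one_mul] at h1
        have h2 := h1.trans_lt (hz.1.2 i)
        rw [mul_sub, Complex.sub_im, abs_lt] at h2
        constructor <;> linarith [h2.1, h2.2]
      rw [indicator_of_mem m1, indicator_of_mem m2]
      simp
    · simp only [g, Fmap, hi, if_false, gDisc]
      rw [indicator_of_mem (by simpa using hzp (e i))]
  calc Vbeta n β S
      = ∫⁻ z in S, ENNReal.ofReal (∏ j, ((β + 1) * (1 - ‖z j‖ ^ 2) ^ β / Real.pi)) := by
        rw [Vbeta, withDensity_apply _ hSm, Measure.restrict_restrict hSm,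
          inter_eq_left.2 (fun z hz => hz.1.1)]
    _ ≤ ∫⁻ z in S, ∏ i, g i (Fmap Φ p I e z i) := setLIntegral_mono' hSm hpt
    _ ≤ ∫⁻ z in polydisc n ∩ ball p ε2, ∏ i, g i (Fmap Φ p I e z i) :=
        lintegral_mono_set fun z hz => ⟨hz.1.1, ball_subset_ball (min_le_right _ _) hz.2⟩
    _ ≤ Cm * ∫⁻ w : Fin n → ℂ, ∏ i, g i (w i) :=
        hpush (fun w => ∏ i, g i (w i))
          (Finset.measurable_prod _ fun i _ => (hg i).comp (measurable_pi_apply i))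
    _ = Cm * ∏ i, ∫⁻ w, g i w := by rw [lintegral_pi_prod n g hg]
    _ ≤ Cm * ∏ i, (D i * ENNReal.ofReal ((1 - ‖u i‖ ^ 2) ^ (2 + β))) := by
        gcongr with i _
        exact hgi i
    _ = _ := by rw [Finset.prod_mul_distrib, mul_assoc]

theorem carleson (hhol : DifferentiableOn ℂ Φ (polydisc n))
    (hsm : ContDiffOn ℝ 1 Φ (closedPolydisc n))
    (hmap : ∀ z ∈ polydisc n, Φ z ∈ polydisc n) (hrank : rankCond n Φ) {β : ℝ} (hβ : -1 < β) :
    ∃ C : ℝ≥0∞, C ≠ ∞ ∧ ∀ u ∈ polydisc n,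
      Vbeta n β (carl Φ u) ≤ C * ∏ i, ENNReal.ofReal ((1 - ‖u i‖ ^ 2) ^ (2 + β)) := by
  have H := fun (p : Fin n → ℂ) (hp : p ∈ closedPolydisc n) =>
    local_carleson hhol hsm hmap hrank hβ hp
  choose! ε hε C hC hb using H
  obtain ⟨t, ht, hcov⟩ := (compact_cpd n).elim_nhds_subcover (fun p => ball p (ε p))
    (fun p hp => ball_mem_nhds p (hε p hp))
  refine ⟨∑ p ∈ t, C p, by simpa [ENNReal.sum_eq_top] using fun p hp => hC p (ht p hp), fun u hu => ?_⟩
  calc Vbeta n β (carl Φ u) ≤ Vbeta n β (⋃ p ∈ t, carl Φ u ∩ ball p (ε p)) := by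
        apply measure_mono
        intro z hz
        have := hcov (polydisc_sub n hz.1)
        simp only [mem_iUnion] at this ⊢
        obtain ⟨p, hp, h⟩ := this
        exact ⟨p, hp, hz, h⟩
    _ ≤ ∑ p ∈ t, Vbeta n β (carl Φ u ∩ ball p (ε p)) := measure_biUnion_finset_le _ _
    _ ≤ ∑ p ∈ t, C p * ∏ i, ENNReal.ofReal ((1 - ‖u i‖ ^ 2) ^ (2 + β)) :=
        Finset.sum_le_sum fun p hp => hb p (ht p hp) u hu
    _ = _ := by rw [Finset.sum_mul]

end

theorem circle_submean {h : ℂ → ℂ} {w : ℂ} {r : ℝ} (hr : 0 < r) (hh : DiffContOnCl ℂ h (ball w r)) :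
    ENNReal.ofReal (2 * Real.pi) * ‖h w‖ₑ ^ 2 ≤
      ∫⁻ θ in Ioo (-Real.pi) Real.pi, ‖h (circleMap w r θ)‖ₑ ^ 2 := by
  have h2 : DiffContOnCl ℂ (fun z => h z ^ 2) (ball w |r|) := by
    rw [abs_of_pos hr]
    exact ⟨hh.1.pow 2, hh.2.pow 2⟩
  have h3 := h2.circleAverage
  rw [Real.circleAverage_def] at h3
  have hpi := Real.pi_pos
  have h4 : ∫ θ in (-Real.pi)..Real.pi, h (circleMap w r θ) ^ 2 = (2 * Real.pi : ℝ) • (h w ^ 2) := by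
    rw [← h3, smul_smul, mul_inv_cancel₀ (by positivity), one_smul]
    have hp : Function.Periodic (fun θ => h (circleMap w r θ) ^ 2) (2 * Real.pi) := by
      intro θ
      simp only [periodic_circleMap w r θ]
    have := hp.intervalIntegral_add_eq (-Real.pi) 0
    rw [zero_add] at this
    rw [← this]
    congr 1; ring
  have h5 : ‖(2 * Real.pi : ℝ) • (h w ^ 2)‖ₑ = ENNReal.ofReal (2 * Real.pi) * ‖h w‖ₑ ^ 2 := by
    rw [enorm_smul, enorm_pow, Real.enorm_eq_ofReal (by positivity)]
  rw [← h5, ← h4, intervalIntegral.integral_of_le (by linarith), restrict_Ioo_eq_restrict_Ioc]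
  refine (enorm_integral_le_lintegral_enorm _).trans (le_of_eq ?_)
  simp only [enorm_pow]

theorem lintegral_id_Ioo {R : ℝ} (hR : 0 < R) :
    ∫⁻ r in Ioo 0 R, ENNReal.ofReal r = ENNReal.ofReal (R ^ 2 / 2) := by
  rw [← ofReal_integral_eq_lintegral_ofReal]
  · rw [← integral_Ioc_eq_integral_Ioo, ← intervalIntegral.integral_of_le hR.le]
    simp
  · exact (continuous_id.integrableOn_Icc (a := 0) (b := R)).mono_set Ioo_subset_Icc_self
  · filter_upwards [ae_restrict_mem measurableSet_Ioo] with x hx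
    exact hx.1.le

theorem disc_submean {h : ℂ → ℂ} (hm : Measurable h) {w : ℂ} {R : ℝ} (hR : 0 < R)
    (hh : DifferentiableOn ℂ h (ball w R)) :
    ENNReal.ofReal (Real.pi * R ^ 2) * ‖h w‖ₑ ^ 2 ≤ ∫⁻ u in ball w R, ‖h u‖ₑ ^ 2 := by
  have h1 : ∫⁻ u in ball w R, ‖h u‖ₑ ^ 2 =
      ∫⁻ u, (ball w R).indicator (fun u => ‖h u‖ₑ ^ 2) (w + u) := by
    rw [lintegral_add_left_eq_self (fun u => (ball w R).indicator (fun u => ‖h u‖ₑ ^ 2) u),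
      lintegral_indicator measurableSet_ball]
  have hmm : Measurable fun u => (ball w R).indicator (fun u => ‖h u‖ₑ ^ 2) (w + u) := by
    have : Measurable ((ball w R).indicator (fun u => ‖h u‖ₑ ^ 2)) :=
      (hm.enorm.pow_const 2).indicator measurableSet_ball
    exact this.comp (measurable_const.add measurable_id)
  rw [h1, ← Complex.lintegral_comp_polarCoord_symm, polarCoord_target, Measure.volume_eq_prod,
    ← Measure.prod_restrict, lintegral_prod]
  · have hsub : Ioo 0 R ⊆ Ioi (0:ℝ) := fun x hx => hx.1
    refine le_trans ?_ (lintegral_mono_set hsub)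
    have h2 : ENNReal.ofReal (Real.pi * R ^ 2) * ‖h w‖ₑ ^ 2 =
        ∫⁻ r in Ioo 0 R, ENNReal.ofReal r * (ENNReal.ofReal (2 * Real.pi) * ‖h w‖ₑ ^ 2) := by
      rw [lintegral_mul_const _ (by fun_prop), lintegral_id_Ioo hR, ← mul_assoc,
        ← ENNReal.ofReal_mul (by positivity)]
      congr 2; ring
    rw [h2]
    refine setLIntegral_mono' measurableSet_Ioo fun r hr => ?_
    have hcl : DiffContOnCl ℂ h (ball w r) := by
      apply DifferentiableOn.diffContOnCl
      refine hh.mono ?_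
      rw [closure_ball _ hr.1.ne']
      exact closedBall_subset_ball hr.2
    simp only [smul_eq_mul]
    rw [lintegral_const_mul' _ _ ENNReal.ofReal_ne_top]
    gcongr
    refine (circle_submean hr.1 hcl).trans (le_of_eq ?_)
    refine lintegral_congr fun θ => ?_
    have e : w + Complex.polarCoord.symm (r, θ) = circleMap w r θ := by
      rw [Complex.polarCoord_symm_apply, circleMap, Complex.exp_mul_I]
      simp
    rw [e, indicator_of_mem]
    rw [mem_ball, dist_eq_norm]
    simpa [abs_of_pos hr.1] using hr.2
  · refine Measurable.aemeasurable ?_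
    refine Measurable.smul (measurable_fst.ennreal_ofReal) (hmm.comp ?_)
    exact Complex.measurableEquivRealProd.symm.measurable.comp continuous_polarCoord_symm.measurable

theorem poly_submean {n : ℕ} {f : (Fin n → ℂ) → ℂ} (hm : Measurable f)
    (hf : DifferentiableOn ℂ f (polydisc n)) {w : Fin n → ℂ} (hw : w ∈ polydisc n) :
    (∏ i, ENNReal.ofReal (Real.pi * ((1 - ‖w i‖) / 2) ^ 2)) * ‖f w‖ₑ ^ 2 ≤
      ∫⁻ u in Set.pi univ (fun i => ball (w i) ((1 - ‖w i‖) / 2)), ‖f u‖ₑ ^ 2 := by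
  classical
  set μ : Fin n → Measure ℂ := fun i => volume.restrict (ball (w i) ((1 - ‖w i‖) / 2)) with hμ
  set G : (Fin n → ℂ) → ℝ≥0∞ := fun u => ‖f u‖ₑ ^ 2 with hG
  have hGm : Measurable G := hm.enorm.pow_const 2
  have key : ∀ s : Finset (Fin n), ∀ x ∈ polydisc n, (∀ i ∈ s, x i = w i) →
      (∏ i ∈ s, ENNReal.ofReal (Real.pi * ((1 - ‖w i‖) / 2) ^ 2)) * ‖f x‖ₑ ^ 2 ≤
        (∫⋯∫⁻_s, G ∂μ) x := by
    intro s
    induction s using Finset.induction_on with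
    | empty => intro x _ _; simp [hG]
    | insert i s hi ih =>
      intro x hx hxs
      rw [lmarginal_insert _ hGm hi, Finset.prod_insert hi]
      have hwi : ‖w i‖ < 1 := hw i
      have hin : ∀ y ∈ ball (w i) ((1 - ‖w i‖) / 2), Function.update x i y ∈ polydisc n := by
        intro y hy j
        by_cases hj : j = i
        · subst hj
          rw [Function.update_self]
          rw [mem_ball, dist_eq_norm] at hy
          have := norm_add_le (y - w j) (w j)
          rw [sub_add_cancel] at this
          linarith
        · rw [Function.update_of_ne hj]; exact hx j
      have hd : DifferentiableOn ℂ (fun y => f (Function.update x i y))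
          (ball (w i) ((1 - ‖w i‖) / 2)) := by
        refine hf.comp ?_ hin
        intro y _
        exact (hasFDerivAt_update x y).differentiableAt.differentiableWithinAt
      have hmm : Measurable (fun y => f (Function.update x i y)) :=
        hm.comp (measurable_update x)
      have h1 := disc_submean hmm (by linarith) hd
      have hux : Function.update x i (w i) = x := by
        rw [← hxs i (Finset.mem_insert_self _ _), Function.update_eq_self]
      rw [hux] at h1
      calc _ = (∏ i ∈ s, ENNReal.ofReal (Real.pi * ((1 - ‖w i‖) / 2) ^ 2)) *
            (ENNReal.ofReal (Real.pi * ((1 - ‖w i‖) / 2) ^ 2) * ‖f x‖ₑ ^ 2) := by ring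
        _ ≤ (∏ i ∈ s, ENNReal.ofReal (Real.pi * ((1 - ‖w i‖) / 2) ^ 2)) *
            ∫⁻ u in ball (w i) ((1 - ‖w i‖) / 2), ‖f (Function.update x i u)‖ₑ ^ 2 := by gcongr
        _ = ∫⁻ u in ball (w i) ((1 - ‖w i‖) / 2),
            (∏ i ∈ s, ENNReal.ofReal (Real.pi * ((1 - ‖w i‖) / 2) ^ 2)) *
              ‖f (Function.update x i u)‖ₑ ^ 2 := by
            rw [lintegral_const_mul _ (hmm.enorm.pow_const 2)]
        _ ≤ _ := by
            refine setLIntegral_mono' measurableSet_ball fun y hy => ?_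
            refine ih _ (hin y hy) ?_
            intro j hj
            rw [Function.update_of_ne (by rintro rfl; exact hi hj)]
            exact hxs j (Finset.mem_insert_of_mem hj)
  have h := key Finset.univ w hw (fun _ _ => rfl)
  rw [lmarginal_univ] at h
  rw [volume_pi, Measure.restrict_pi_pi]
  exact h

theorem meas_indicator_polydisc {n : ℕ} {E : Type*} [NormedAddCommGroup E] [MeasurableSpace E]
    [BorelSpace E] {f : (Fin n → ℂ) → E}
    (hf : ContinuousOn f (polydisc n)) : Measurable ((polydisc n).indicator f) := by
  classical
  have h := hf.measurable_piecewise (g := fun _ => (0:E)) continuousOn_const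
    (isOpen_polydisc n).measurableSet
  have e : (polydisc n).indicator f = (polydisc n).piecewise f (fun _ => (0:E)) := by
    ext x; simp [indicator, Set.piecewise]
  rw [e]; exact h

theorem lintegral_Vbeta_congr {n : ℕ} {β : ℝ} {F G : (Fin n → ℂ) → ℝ≥0∞}
    (h : ∀ z ∈ polydisc n, F z = G z) : ∫⁻ z, F z ∂(Vbeta n β) = ∫⁻ z, G z ∂(Vbeta n β) := by
  apply lintegral_congr_ae
  unfold Vbeta
  apply (withDensity_absolutelyContinuous _ _).ae_le
  filter_upwards [ae_restrict_mem (isOpen_polydisc n).measurableSet] with z hz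
  exact h z hz

theorem lintegral_Vbeta_mono {n : ℕ} {β : ℝ} {F G : (Fin n → ℂ) → ℝ≥0∞}
    (h : ∀ z ∈ polydisc n, F z ≤ G z) : ∫⁻ z, F z ∂(Vbeta n β) ≤ ∫⁻ z, G z ∂(Vbeta n β) := by
  apply lintegral_mono_ae
  unfold Vbeta
  apply (withDensity_absolutelyContinuous _ _).ae_le
  filter_upwards [ae_restrict_mem (isOpen_polydisc n).measurableSet] with z hz
  exact h z hz

/-- The comparison kernel. -/
def kerK (n : ℕ) (u : Fin n → ℂ) : ℝ≥0∞ :=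
  ∏ i, ENNReal.ofReal (36 / (Real.pi * (1 - ‖u i‖ ^ 2) ^ 2))

theorem kerK_meas (n : ℕ) : Measurable (kerK n) := by
  unfold kerK
  fun_prop

/-- The relation between points and Carleson boxes. -/
def relS {n : ℕ} (Ψ : (Fin n → ℂ) → (Fin n → ℂ)) : Set ((Fin n → ℂ) × (Fin n → ℂ)) :=
  {p | p.1 ∈ polydisc n ∧ p.2 ∈ polydisc n ∧ ∀ i, ‖Ψ p.1 i - p.2 i‖ < 1 - ‖p.2 i‖ ^ 2}

theorem relS_meas {n : ℕ} {Ψ : (Fin n → ℂ) → (Fin n → ℂ)} (h : Measurable Ψ) :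
    MeasurableSet (relS Ψ) := by
  have h1 : MeasurableSet {p : (Fin n → ℂ) × (Fin n → ℂ) | p.1 ∈ polydisc n} :=
    measurable_fst (isOpen_polydisc n).measurableSet
  have h2 : MeasurableSet {p : (Fin n → ℂ) × (Fin n → ℂ) | p.2 ∈ polydisc n} :=
    measurable_snd (isOpen_polydisc n).measurableSet
  have h3 : MeasurableSet {p : (Fin n → ℂ) × (Fin n → ℂ) |
      ∀ i, ‖Ψ p.1 i - p.2 i‖ < 1 - ‖p.2 i‖ ^ 2} := by
    rw [Set.ofPred_forall]
    refine MeasurableSet.iInter fun i => ?_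
    have hΨ : Measurable fun p : (Fin n → ℂ) × (Fin n → ℂ) => Ψ p.1 i :=
      (measurable_pi_apply i).comp (h.comp measurable_fst)
    have hs : Measurable fun p : (Fin n → ℂ) × (Fin n → ℂ) => p.2 i :=
      (measurable_pi_apply i).comp measurable_snd
    exact measurableSet_lt (hΨ.sub hs).norm (measurable_const.sub (hs.norm.pow_const 2))
  exact h1.inter (h2.inter h3)

theorem pointwise_bound {n : ℕ} {g : (Fin n → ℂ) → ℂ} (hm : Measurable g)
    (hg : DifferentiableOn ℂ g (polydisc n)) {Ψ : (Fin n → ℂ) → (Fin n → ℂ)}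
    {z : Fin n → ℂ} (hz : z ∈ polydisc n) (hw : Ψ z ∈ polydisc n) :
    ‖g (Ψ z)‖ₑ ^ 2 ≤ ∫⁻ u, (relS Ψ).indicator (fun p => ‖g p.2‖ₑ ^ 2 * kerK n p.2) (z, u) := by
  set w := Ψ z with hwdef
  have hpi := Real.pi_pos
  set A : ℝ≥0∞ := ∏ i, ENNReal.ofReal (Real.pi * ((1 - ‖w i‖) / 2) ^ 2) with hA
  have hA0 : A ≠ 0 := by
    rw [hA, Finset.prod_ne_zero_iff]
    intro i _
    have : ‖w i‖ < 1 := hw i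
    have h1 : 0 < 1 - ‖w i‖ := by linarith
    rw [ne_eq, ENNReal.ofReal_eq_zero, not_le]
    positivity
  have hAt : A ≠ ∞ := ENNReal.prod_ne_top fun i _ => ENNReal.ofReal_ne_top
  have hP : MeasurableSet (Set.pi univ (fun i => ball (w i) ((1 - ‖w i‖) / 2))) :=
    MeasurableSet.univ_pi fun i => measurableSet_ball
  have hsub := poly_submean hm hg hw
  rw [← hA] at hsub
  calc ‖g w‖ₑ ^ 2 = A⁻¹ * (A * ‖g w‖ₑ ^ 2) := by
        rw [← mul_assoc, ENNReal.inv_mul_cancel hA0 hAt, one_mul]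
    _ ≤ A⁻¹ * ∫⁻ u in Set.pi univ (fun i => ball (w i) ((1 - ‖w i‖) / 2)), ‖g u‖ₑ ^ 2 := by gcongr
    _ = ∫⁻ u in Set.pi univ (fun i => ball (w i) ((1 - ‖w i‖) / 2)), A⁻¹ * ‖g u‖ₑ ^ 2 := by
        rw [lintegral_const_mul _ (hm.enorm.pow_const 2)]
    _ ≤ ∫⁻ u in Set.pi univ (fun i => ball (w i) ((1 - ‖w i‖) / 2)),
          (relS Ψ).indicator (fun p => ‖g p.2‖ₑ ^ 2 * kerK n p.2) (z, u) := by
        refine setLIntegral_mono' hP fun u hu => ?_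
        have hd : ∀ i, ‖u i - w i‖ < (1 - ‖w i‖) / 2 := by
          intro i
          have := hu i (mem_univ i)
          rwa [mem_ball, dist_eq_norm] at this
        have hu1 : ∀ i, ‖u i‖ ≤ ‖w i‖ + ‖u i - w i‖ := by
          intro i
          have := norm_add_le (u i - w i) (w i)
          rw [sub_add_cancel] at this
          linarith
        have hw1 : ∀ i, ‖w i‖ ≤ ‖u i‖ + ‖u i - w i‖ := by
          intro i
          have := norm_sub_le (u i) (u i - w i)
          rw [show u i - (u i - w i) = w i by ring] at this
          linarith
        have hup : ∀ i, ‖u i‖ < 1 := by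
          intro i
          have := hd i; have := hu1 i; have : ‖w i‖ < 1 := hw i
          linarith
        have hmem : (z, u) ∈ relS Ψ := by
          refine ⟨hz, hup, fun i => ?_⟩
          have h1 := hd i; have h2 := hu1 i; have h3 := hup i
          have h4 := norm_nonneg (u i)
          have e : ‖Ψ z i - u i‖ = ‖u i - w i‖ := norm_sub_rev _ _
          simp only
          rw [e]
          nlinarith
        rw [indicator_of_mem hmem]
        simp only
        rw [mul_comm]
        gcongr
        have hone : 1 ≤ A * kerK n u := by
          rw [hA, kerK, ← Finset.prod_mul_distrib]
          apply Finset.one_le_prod'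
          intro i _
          rw [← ENNReal.ofReal_mul (by positivity), ENNReal.one_le_ofReal]
          have h1 := hd i; have h2 := hw1 i; have h3 := hup i
          have h4 := norm_nonneg (u i)
          have h5 : ‖w i‖ < 1 := hw i
          have hδ : 0 < 1 - ‖u i‖ ^ 2 := by nlinarith
          have h6 : 1 - ‖u i‖ ^ 2 ≤ 6 * ((1 - ‖w i‖) / 2) := by nlinarith
          have h7 : (1 - ‖u i‖ ^ 2) ^ 2 ≤ (6 * ((1 - ‖w i‖) / 2)) ^ 2 :=
            pow_le_pow_left₀ hδ.le h6 2
          rw [mul_div_assoc', le_div_iff₀ (by positivity)]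
          nlinarith
        calc A⁻¹ = A⁻¹ * 1 := by rw [mul_one]
          _ ≤ A⁻¹ * (A * kerK n u) := by gcongr
          _ = kerK n u := by rw [← mul_assoc, ENNReal.inv_mul_cancel hA0 hAt, one_mul]
    _ ≤ _ := setLIntegral_le_lintegral _ _

theorem ker_density {n : ℕ} {β : ℝ} (hβ : -1 < β) {u : Fin n → ℂ} (hu : u ∈ polydisc n) :
    kerK n u * ∏ i, ENNReal.ofReal ((1 - ‖u i‖ ^ 2) ^ (2 + β)) =
      ENNReal.ofReal (36 / (β + 1)) ^ n *
        ENNReal.ofReal (∏ j, ((β + 1) * (1 - ‖u j‖ ^ 2) ^ β / Real.pi)) := by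
  have hpi := Real.pi_pos
  have hb : 0 < β + 1 := by linarith
  have hδ : ∀ i, 0 < 1 - ‖u i‖ ^ 2 := by
    intro i
    have := hu i
    have := norm_nonneg (u i)
    nlinarith
  rw [ENNReal.ofReal_prod_of_nonneg (fun i _ => by have := hδ i; positivity), kerK,
    ← Finset.prod_mul_distrib]
  have e : ENNReal.ofReal (36 / (β + 1)) ^ n = ∏ _i : Fin n, ENNReal.ofReal (36 / (β + 1)) := by
    simp
  rw [e, ← Finset.prod_mul_distrib]
  refine Finset.prod_congr rfl fun i _ => ?_
  have hi := hδ i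
  rw [← ENNReal.ofReal_mul (by positivity), ← ENNReal.ofReal_mul (by positivity)]
  congr 1
  rw [Real.rpow_add hi, Real.rpow_two]
  field_simp

theorem main_bound {n : ℕ} {Φ : (Fin n → ℂ) → (Fin n → ℂ)}
    (hhol : DifferentiableOn ℂ Φ (polydisc n))
    (hmap : ∀ z ∈ polydisc n, Φ z ∈ polydisc n) {β : ℝ} (hβ : -1 < β) {C : ℝ≥0∞}
    (hC : C ≠ ∞) (hcarl : ∀ u ∈ polydisc n, Vbeta n β (carl Φ u) ≤
      C * ∏ i, ENNReal.ofReal ((1 - ‖u i‖ ^ 2) ^ (2 + β))) : bddBergman n β Φ := by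
  classical
  set c : ℝ≥0∞ := C * ENNReal.ofReal (36 / (β + 1)) ^ n with hc
  have hct : c ≠ ∞ := ENNReal.mul_ne_top hC (ENNReal.pow_ne_top ENNReal.ofReal_ne_top)
  refine ⟨c.toReal + 1, by positivity, fun f hf => ?_⟩
  have hcle : c ≤ ENNReal.ofReal (c.toReal + 1) := by
    rw [ENNReal.le_ofReal_iff_toReal_le hct (by positivity)]; linarith
  refine le_trans ?_ (mul_le_mul_left hcle _)
  set g := (polydisc n).indicator f with hgdef
  set Ψ := (polydisc n).indicator Φ with hΨdef
  have hgm : Measurable g := meas_indicator_polydisc hf.continuousOn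
  have hΨm : Measurable Ψ := meas_indicator_polydisc hhol.continuousOn
  have hgf : ∀ z ∈ polydisc n, g z = f z := fun z hz => indicator_of_mem hz _
  have hΨΦ : ∀ z ∈ polydisc n, Ψ z = Φ z := fun z hz => indicator_of_mem hz _
  have hgd : DifferentiableOn ℂ g (polydisc n) := hf.congr hgf
  have hne : ∀ x : ℂ, ENNReal.ofReal (‖x‖ ^ 2) = ‖x‖ₑ ^ 2 := by
    intro x
    rw [ENNReal.ofReal_pow (norm_nonneg _), ofReal_norm]
  simp only [hne]
  have hR : ∫⁻ z, ‖f z‖ₑ ^ 2 ∂(Vbeta n β) = ∫⁻ z, ‖g z‖ₑ ^ 2 ∂(Vbeta n β) :=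
    lintegral_Vbeta_congr fun z hz => by rw [hgf z hz]
  rw [hR]
  set H : (Fin n → ℂ) → (Fin n → ℂ) → ℝ≥0∞ := fun z u =>
    (relS Ψ).indicator (fun p => ‖g p.2‖ₑ ^ 2 * kerK n p.2) (z, u) with hH
  have hHm : Measurable (Function.uncurry H) := by
    have : Function.uncurry H = (relS Ψ).indicator (fun p => ‖g p.2‖ₑ ^ 2 * kerK n p.2) := by
      ext p; rfl
    rw [this]
    refine Measurable.indicator ?_ (relS_meas hΨm)
    exact ((hgm.comp measurable_snd).enorm.pow_const 2).mul ((kerK_meas n).comp measurable_snd)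
  have : SFinite (Vbeta n β) := by unfold Vbeta; infer_instance
  have hdm : Measurable fun z : Fin n → ℂ =>
      ENNReal.ofReal (∏ j, ((β + 1) * (1 - ‖z j‖ ^ 2) ^ β / Real.pi)) := by fun_prop
  calc ∫⁻ z, ‖f (Φ z)‖ₑ ^ 2 ∂(Vbeta n β) ≤ ∫⁻ z, ∫⁻ u, H z u ∂volume ∂(Vbeta n β) := by
        refine lintegral_Vbeta_mono fun z hz => ?_
        have h1 := pointwise_bound hgm hgd (Ψ := Ψ) hz (by rw [hΨΦ z hz]; exact hmap z hz)
        rwa [hΨΦ z hz, hgf _ (hmap z hz)] at h1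
    _ = ∫⁻ u, ∫⁻ z, H z u ∂(Vbeta n β) ∂volume := lintegral_lintegral_swap hHm.aemeasurable
    _ ≤ ∫⁻ u, c * (polydisc n).indicator (fun u => 
          ENNReal.ofReal (∏ j, ((β + 1) * (1 - ‖u j‖ ^ 2) ^ β / Real.pi)) * ‖g u‖ₑ ^ 2) u := by
        refine lintegral_mono fun u => ?_
        by_cases hu : u ∈ polydisc n
        · rw [indicator_of_mem hu]
          have hle : ∀ z, H z u ≤
              (carl Φ u).indicator (fun _ => ‖g u‖ₑ ^ 2 * kerK n u) z := by
            intro z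
            by_cases hz : (z, u) ∈ relS Ψ
            · have hz2 : z ∈ carl Φ u := by
                refine ⟨hz.1, fun i => ?_⟩
                have := hz.2.2 i
                simp only at this
                rwa [hΨΦ z hz.1] at this
              simp only [hH]
              rw [indicator_of_mem hz, indicator_of_mem hz2]
            · simp only [hH]
              rw [indicator_of_notMem hz]; exact zero_le
          calc ∫⁻ z, H z u ∂(Vbeta n β)
              ≤ ∫⁻ z, (carl Φ u).indicator (fun _ => ‖g u‖ₑ ^ 2 * kerK n u) z ∂(Vbeta n β) :=
                lintegral_mono hle
            _ ≤ ‖g u‖ₑ ^ 2 * kerK n u * Vbeta n β (carl Φ u) := lintegral_indicator_const_le _ _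
            _ ≤ ‖g u‖ₑ ^ 2 * kerK n u *
                (C * ∏ i, ENNReal.ofReal ((1 - ‖u i‖ ^ 2) ^ (2 + β))) := by
                gcongr; exact hcarl u hu
            _ = ‖g u‖ₑ ^ 2 * C *
                (kerK n u * ∏ i, ENNReal.ofReal ((1 - ‖u i‖ ^ 2) ^ (2 + β))) := by ring
            _ = _ := by rw [ker_density hβ hu, hc]; ring
        · have : ∀ z, H z u = 0 := by
            intro z
            simp only [hH]
            rw [indicator_of_notMem]
            intro h
            exact hu h.2.1
          simp [this]
    _ = c * ∫⁻ z, ‖g z‖ₑ ^ 2 ∂(Vbeta n β) := by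
        rw [lintegral_const_mul' _ _ hct, lintegral_indicator (isOpen_polydisc n).measurableSet]
        congr 1
        unfold Vbeta
        rw [lintegral_withDensity_eq_lintegral_mul _ hdm (hgm.enorm.pow_const 2)]
        rfl

end HelperLemmas


theorem rank_sufficiency_bergman (n : ℕ) (Φ : (Fin n → ℂ) → (Fin n → ℂ))
    (hhol : DifferentiableOn ℂ Φ (polydisc n))
    (hsm : ContDiffOn ℝ 1 Φ (closedPolydisc n))
    (hmap : ∀ z ∈ polydisc n, Φ z ∈ polydisc n)
    (hrank : rankCond n Φ) :
    ∀ β : ℝ, -1 < β → bddBergman n β Φ := by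
  intro β hβ
  obtain ⟨C, hC, h⟩ := carleson hhol hsm hmap hrank hβ
  exact main_bound hhol hmap hβ hC h

end
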